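/- arXiv:2111.05165 — 2 statements merged into one kernel-verified Lean document; each statement's English description precedes it below -/
import Mathlib

section
/- Let G ⊆ ℂ be a countable union of uniformly separated Jordan arcs or Jordan curves (i.e., G = ⋃ₖ gₖ where each gₖ is a Jordan arc or a Jordan curve and there exists δ > 0 with dist(gₖ, gₖ') ≥ δ for all k ≠ k'), let Ω ⊆ ℂ be a domain, let Φ = (φₙ) be a sequence of continuous maps from G to Ω, and let M be the family of all compact subsets of G with connected complement in ℂ. If for every compact set L ⊆ Ω and every K ∈ M there exists n ∈ ℕ such that φₙ is injective on K and φₙ(K) ∩ L = ∅, then there exists a (Φ,M)-universal function in H(Ω). -/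
open Set Metric Bornology Filter

/-- A *hole* of `E` is a nonempty bounded connected component of `ℂ \ E`. -/
def IsHole (E C : Set ℂ) : Prop :=
  (∃ z ∈ Eᶜ, C = connectedComponentIn Eᶜ z) ∧ Bornology.IsBounded C

/-- A compact set `K` contained in an open set `Ω` is `Ω`-*convex* if every hole of `K`
contains a point of `ℂ \ Ω`. -/
def OmegaConvex (Ω K : Set ℂ) : Prop :=
  ∀ C : Set ℂ, IsHole K C → (C ∩ Ωᶜ).Nonempty

/-- The *polynomial hull* of `K`: the union of `K` and all of its holes. -/
def polyHull (K : Set ℂ) : Set ℂ :=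
  K ∪ {z | z ∈ Kᶜ ∧ Bornology.IsBounded (connectedComponentIn Kᶜ z)}

/-- A sequence of maps is *eventually injective* on `G`: for every compact `K ⊆ G`, the maps
are eventually injective on a neighbourhood of `K` in `G`. -/
def EventuallyInjective (G : Set ℂ) (φ : ℕ → ℂ → ℂ) : Prop :=
  ∀ K : Set ℂ, K ⊆ G → IsCompact K →
    ∃ N : ℕ, ∀ n ≥ N, ∃ U : Set ℂ, IsOpen U ∧ K ⊆ U ∧ U ⊆ G ∧ Set.InjOn (φ n) U

/-- `f` is `(Φ, G, Ω)`-*universal*: the family `{f ∘ φ n : n ∈ ℕ}` is dense in `H(G)` for the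
topology of locally uniform convergence, i.e. every `g` holomorphic on `G` can be approximated
uniformly on every compact subset of `G` by functions `f ∘ φ n`. -/
def UniversalFor (G : Set ℂ) (φ : ℕ → ℂ → ℂ) (f : ℂ → ℂ) : Prop :=
  ∀ g : ℂ → ℂ, DifferentiableOn ℂ g G →
    ∀ K : Set ℂ, K ⊆ G → IsCompact K → ∀ ε : ℝ, 0 < ε →
      ∃ n : ℕ, ∀ z ∈ K, ‖f (φ n z) - g z‖ < ε

/-- `E` has no hole (for a domain: simple connectivity). -/
def HasNoHole (E : Set ℂ) : Prop := ¬ ∃ C : Set ℂ, IsHole E C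

/-- A *Jordan curve*: the image of the unit circle under an injective continuous map. -/
def IsJordanCurve (C : Set ℂ) : Prop :=
  ∃ γ : ℂ → ℂ, ContinuousOn γ (Metric.sphere 0 1) ∧ Set.InjOn γ (Metric.sphere 0 1) ∧
    C = γ '' Metric.sphere 0 1

/-- A *Jordan arc*: the image of `[0,1]` under an injective continuous map. -/
def IsJordanArc (C : Set ℂ) : Prop :=
  ∃ γ : ℝ → ℂ, ContinuousOn γ (Set.Icc 0 1) ∧ Set.InjOn γ (Set.Icc 0 1) ∧
    C = γ '' Set.Icc 0 1

/-- A compact set is *regular* if its boundary is a union of Jordan curves. -/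
def RegularCompact (K : Set ℂ) : Prop :=
  ∃ 𝒞 : Set (Set ℂ), (∀ C ∈ 𝒞, IsJordanCurve C) ∧ frontier K = ⋃₀ 𝒞

/-- `K` is `Ω`-*connected*: it has no hole if `Ω` is simply connected, and has at least one hole
if `Ω` is not simply connected. -/
def OmegaConnectedSet (Ω K : Set ℂ) : Prop :=
  (HasNoHole Ω → HasNoHole K) ∧ (¬ HasNoHole Ω → ∃ C : Set ℂ, IsHole K C)

/-- Membership in the family `M(Ω)` of nonempty compact subsets of `Ω` that are regular,
connected, `Ω`-connected and `Ω`-convex. -/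
def MemM (Ω K : Set ℂ) : Prop :=
  K.Nonempty ∧ IsCompact K ∧ K ⊆ Ω ∧ RegularCompact K ∧ IsConnected K ∧
    OmegaConnectedSet Ω K ∧ OmegaConvex Ω K

/-- `f` is `(Φ, M)`-*universal*: for every `K ∈ M`, the restrictions of the `f ∘ φ n` to `K`
are dense in `C(K)`. -/
def MUniversal (M : Set (Set ℂ)) (φ : ℕ → ℂ → ℂ) (f : ℂ → ℂ) : Prop :=
  ∀ K ∈ M, ∀ h : ℂ → ℂ, ContinuousOn h K → ∀ ε : ℝ, 0 < ε →
    ∃ n : ℕ, ∀ z ∈ K, ‖f (φ n z) - h z‖ < ε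

/-!
The universal function is found by Baire category in `H(Ω)`. Since `G` is a locally finite union of
arcs and curves, countably many *Lavrentiev sets* `S ⊆ G` (compact, without interior, without
holes) absorb all the compact sets under consideration: a compact `K ⊆ G` with connected complement
omits a point of every curve that it meets, hence meets it inside an arc with rational endpoints,
and the pieces of `K` lie in finitely many disjoint arcs. An injective image `X` of a Lavrentiev set
is again one. It therefore remains to approximate, for an `Ω`-convex compact set `L` disjoint from
`X`, a function on `L ∪ X` that vanishes on `L` and is an arbitrary continuous function on `X` by
functions holomorphic on `Ω`.

The theorem behind this is Lavrentiev's: on an `Ω`-convex compact set `Y`, a continuous function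
that vanishes on the closure of the interior of `Y` belongs to `R(Y)`. A single-valued square root
of `(z - a) / (z - b)`, with `a` and `b` in one component of the complement near and away from `ζ`,
yields an element of `R(Y)` close to `1 / (z - ζ)`. Averaging over `ζ` in a small disc puts a
truncation of `|z - c|²` into `R(Y)`, and such truncations separate points, so that
Stone–Weierstrass applies.

That `L ∪ X` is again `Ω`-convex, and that images of Lavrentiev sets have no interior and no holes,
is seen by means of continuous logarithms, which exist for all zero-free continuous functions on a
Lavrentiev set, and are carried along by homeomorphisms.
-/

open scoped Topology

/-! ### Rational algebras -/

section ClosedSubalgebras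

variable {X : Type*} [TopologicalSpace X] [CompactSpace X] {A : Subalgebra ℂ C(X, ℂ)}

theorem exists_mem_eq_exp (hA : IsClosed (A : Set C(X, ℂ))) {t : C(X, ℂ)} (ht : t ∈ A) :
    ∃ v ∈ A, ∀ x, v x = Complex.exp (t x) := by
  refine ⟨NormedSpace.exp t, NormedSpace.exp_mem hA ht, fun x => ?_⟩
  rw [Complex.exp_eq_exp_ℂ]
  exact NormedSpace.map_exp (ContinuousMap.evalAlgHom ℂ ℂ x) (continuous_eval_const x) t

theorem exists_mem_eq_log_one_add (hA : IsClosed (A : Set C(X, ℂ))) {t : C(X, ℂ)} (ht : t ∈ A)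
    (ht1 : ‖t‖ < 1) : ∃ v ∈ A, ∀ x, v x = Complex.log (1 + t x) := by
  let term : ℕ → C(X, ℂ) := fun n => ((-1 : ℂ) ^ (n + 1) / n) • t ^ n
  have norm_term_le (n : ℕ) : ‖term n‖ ≤ ‖t‖ ^ n := by
    rcases n.eq_zero_or_pos with rfl | hn
    · simp [term]
    have hn' : (1 : ℝ) ≤ n := mod_cast hn
    calc ‖term n‖ = (n : ℝ)⁻¹ * ‖t ^ n‖ := by simp [term, norm_smul]
      _ ≤ 1 * ‖t ^ n‖ := by gcongr; exact inv_le_one_of_one_le₀ hn'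
      _ ≤ ‖t‖ ^ n := by rw [one_mul]; exact norm_pow_le' t hn
  have term_summable : Summable term :=
    .of_norm_bounded (summable_geometric_of_lt_one (norm_nonneg t) ht1) norm_term_le
  refine ⟨∑' n, term n, tsum_mem hA fun n => A.smul_mem (A.pow_mem ht n) _, fun x => ?_⟩
  have hx : ‖t x‖ < 1 := (t.norm_coe_le_norm x).trans_lt ht1
  rw [← ContinuousMap.tsum_apply term_summable x,
    ← (Complex.hasSum_taylorSeries_log hx).tsum_eq]
  exact tsum_congr fun n => by
    simp only [term, ContinuousMap.coe_smul, ContinuousMap.coe_pow, Pi.smul_apply, Pi.pow_apply,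
      smul_eq_mul, div_mul_eq_mul_div]

end ClosedSubalgebras

/-- The coordinate function `z ↦ z` on `Y`. -/
def coord (Y : Set ℂ) : C(Y, ℂ) := ⟨Subtype.val, continuous_subtype_val⟩

@[simp] theorem coord_apply {Y : Set ℂ} (z : Y) : coord Y z = z := rfl

/-- The rational function `z ↦ (z - q)⁻¹` on a set `Y` that does not contain its pole `q`. -/
noncomputable def simplePole {Y : Set ℂ} {q : ℂ} (hq : q ∉ Y) : C(Y, ℂ) where
  toFun z := ((z : ℂ) - q)⁻¹
  continuous_toFun := (continuous_subtype_val.sub continuous_const).inv₀ fun z hz =>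
    hq ((sub_eq_zero.1 hz : (z : ℂ) = q) ▸ z.2)

@[simp] theorem simplePole_apply {Y : Set ℂ} {q : ℂ} (hq : q ∉ Y) (z : Y) :
    simplePole hq z = ((z : ℂ) - q)⁻¹ := rfl

/-- The algebra usually written `R(Y)`: the uniform limits on `Y` of rational functions without
poles on `Y`. -/
noncomputable def rationalAlgebra (Y : Set ℂ) [CompactSpace Y] : Subalgebra ℂ C(Y, ℂ) :=
  (Algebra.adjoin ℂ
    (insert (coord Y) {u | ∃ q, ∃ hq : q ∉ Y, u = simplePole hq})).topologicalClosure

section Runge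

variable {Y : Set ℂ}

theorem coe_sub_ne_zero {p : ℂ} (hp : p ∉ Y) (z : Y) : (z : ℂ) - p ≠ 0 :=
  fun h => hp (sub_eq_zero.1 h ▸ z.2)

theorem spectrum_coord : spectrum ℂ (coord Y) = Y :=
  (ContinuousMap.spectrum_eq_range _).trans Subtype.range_coe

theorem simplePole_mem_iff_notMem_spectrum {A : Subalgebra ℂ C(Y, ℂ)} (hc : coord Y ∈ A) {q : ℂ}
    (hq : q ∉ Y) : simplePole hq ∈ A ↔ q ∉ spectrum ℂ (⟨coord Y, hc⟩ : A) := by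
  have mul_simplePole : (algebraMap ℂ C(Y, ℂ) q - coord Y) * -simplePole hq = 1 := by
    ext z
    have := coe_sub_ne_zero hq z
    simp only [ContinuousMap.mul_apply, ContinuousMap.sub_apply, ContinuousMap.neg_apply,
      algebraMap_apply, coord_apply, simplePole_apply, ContinuousMap.one_apply,
      smul_eq_mul, mul_one]
    field_simp
    ring
  rw [spectrum.notMem_iff]
  constructor
  · intro h
    exact IsUnit.of_mul_eq_one ⟨-simplePole hq, A.neg_mem h⟩ (Subtype.ext mul_simplePole)
  · intro h
    obtain ⟨v, hv⟩ := h.exists_right_inv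
    have hv' : (algebraMap ℂ C(Y, ℂ) q - coord Y) * v = 1 := congrArg Subtype.val hv
    have : simplePole hq = -v := by
      rw [← neg_eq_iff_eq_neg]
      exact left_inv_eq_right_inv ((mul_comm _ _).trans mul_simplePole) hv'
    exact this ▸ A.neg_mem v.2

variable [CompactSpace Y]

theorem isClosed_rationalAlgebra : IsClosed (rationalAlgebra Y : Set C(Y, ℂ)) :=
  Subalgebra.isClosed_topologicalClosure _

theorem coord_mem_rationalAlgebra : coord Y ∈ rationalAlgebra Y :=
  Subalgebra.le_topologicalClosure _ (Algebra.subset_adjoin (mem_insert _ _))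

theorem simplePole_mem_rationalAlgebra {q : ℂ} (hq : q ∉ Y) : simplePole hq ∈ rationalAlgebra Y :=
  Subalgebra.le_topologicalClosure _ (Algebra.subset_adjoin (mem_insert_of_mem _ ⟨q, hq, rfl⟩))

/-- Spectral permanence: the spectrum of `coord Y` in `A` is the union of `Y` and of some of its
holes. -/
theorem rationalAlgebra_le {A : Subalgebra ℂ C(Y, ℂ)} (hA : IsClosed (A : Set C(Y, ℂ)))
    (hc : coord Y ∈ A)
    (hpole : ∀ C, IsHole Y C → ∃ q ∈ C, ∃ hq : q ∉ Y, simplePole hq ∈ A) :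
    rationalAlgebra Y ≤ A := by
  refine Subalgebra.topologicalClosure_minimal (Algebra.adjoin_le ?_) hA
  rintro u (rfl | ⟨q, hq, rfl⟩)
  · exact hc
  rw [SetLike.mem_coe, simplePole_mem_iff_notMem_spectrum hc]
  intro hqσ
  have hσ := Subalgebra.spectrum_sUnion_connectedComponentIn A (⟨coord Y, hc⟩ : A)
  have hbdd := Subalgebra.spectrum_isBounded_connectedComponentIn A (⟨coord Y, hc⟩ : A) hqσ
  simp only [spectrum_coord] at hσ hbdd
  obtain ⟨p, hpC, hpY, hp⟩ := hpole _ ⟨⟨q, hq, rfl⟩, hbdd⟩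
  refine (simplePole_mem_iff_notMem_spectrum hc hpY).1 hp ?_
  rw [hσ]
  exact .inr (mem_biUnion (mem_sdiff_of_mem hqσ hq) hpC)

end Runge

section Logarithms

theorem log_mul_of_re_pos {u v : ℂ} (hu : 0 < u.re) (hv : 0 < v.re) :
    Complex.log (u * v) = Complex.log u + Complex.log v := by
  have hu' := abs_lt.1 (Complex.abs_arg_lt_pi_div_two_iff.2 (.inl hu))
  have hv' := abs_lt.1 (Complex.abs_arg_lt_pi_div_two_iff.2 (.inl hv))
  exact Complex.log_mul (by rintro rfl; simp at hu) (by rintro rfl; simp at hv)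
    ⟨by linarith, by linarith⟩

theorem log_inv_of_re_pos {u : ℂ} (hu : 0 < u.re) : Complex.log u⁻¹ = -Complex.log u := by
  have hu' := abs_lt.1 (Complex.abs_arg_lt_pi_div_two_iff.2 (.inl hu))
  exact Complex.log_inv u fun h => by linarith [Real.pi_pos]

variable {Y U : Set ℂ} [CompactSpace Y]

/-- For `b` near `a` the logarithm is a power series in `(b - a) / (z - b)`. -/
theorem eventually_exists_mem_rationalAlgebra_eq_log {a : ℂ} (ha : a ∉ Y) :
    ∀ᶠ b in 𝓝 a, b ∉ Y ∧
      ∃ α ∈ rationalAlgebra Y, ∀ z : Y, α z = Complex.log ((z - a) / (z - b)) := by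
  have hY : IsClosed Y := (isCompact_iff_compactSpace.2 ‹_›).isClosed
  obtain ⟨ε, hε, hball⟩ := Metric.isOpen_iff.1 hY.isOpen_compl a ha
  filter_upwards [Metric.ball_mem_nhds a (show 0 < ε / 3 by positivity)] with b hb
  have hba : ‖b - a‖ < ε / 3 := by rwa [mem_ball_iff_norm] at hb
  have hbY : b ∉ Y := hball (ball_subset_ball (by linarith) hb)
  have norm_le : ‖(b - a) • simplePole hbY‖ ≤ 1 / 2 := by
    refine (ContinuousMap.norm_le _ (by norm_num)).2 fun z => ?_
    have hza : ε ≤ ‖(z : ℂ) - a‖ := by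
      by_contra! h
      exact hball (mem_ball_iff_norm.2 h) z.2
    have hzb : ‖(z : ℂ) - a‖ ≤ ‖(z : ℂ) - b‖ + ‖b - a‖ := norm_sub_le_norm_sub_add_norm_sub ..
    rw [ContinuousMap.smul_apply, simplePole_apply, smul_eq_mul, norm_mul, norm_inv,
      ← div_eq_mul_inv, div_le_iff₀ (norm_pos_iff.2 (coe_sub_ne_zero hbY z))]
    linarith
  obtain ⟨α, hα, hα_log⟩ := exists_mem_eq_log_one_add isClosed_rationalAlgebra
    (Subalgebra.smul_mem _ (simplePole_mem_rationalAlgebra hbY) (b - a))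
    (norm_le.trans_lt (by norm_num))
  refine ⟨hbY, α, hα, fun z => (hα_log z).trans (congrArg Complex.log ?_)⟩
  have := coe_sub_ne_zero hbY z
  simp only [ContinuousMap.smul_apply, simplePole_apply, smul_eq_mul]
  field_simp
  ring

theorem exists_mem_rationalAlgebra_exp_eq (hU : IsPreconnected U) (hUY : U ⊆ Yᶜ) {a b : ℂ}
    (ha : a ∈ U) (hb : b ∈ U) :
    ∃ α ∈ rationalAlgebra Y, ∀ z : Y, Complex.exp (α z) = (z - a) / (z - b) ∧
      ((∀ p ∈ U, ∀ q ∈ U, 0 < ((z - p) / (z - q)).re) →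
        α z = Complex.log ((z - a) / (z - b))) := by
  refine hU.induction₂ (fun a b => ∃ α ∈ rationalAlgebra Y, ∀ z : Y,
    Complex.exp (α z) = (z - a) / (z - b) ∧ ((∀ p ∈ U, ∀ q ∈ U, 0 < ((z - p) / (z - q)).re) →
      α z = Complex.log ((z - a) / (z - b)))) ?near ?trans ?symm ha hb
  case near =>
    intro x hx
    filter_upwards [(eventually_exists_mem_rationalAlgebra_eq_log (hUY hx)).filter_mono
      nhdsWithin_le_nhds] with y ⟨hy, α, hα, hα_log⟩
    refine ⟨α, hα, fun z => ⟨?_, fun _ => hα_log z⟩⟩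
    rw [hα_log, Complex.exp_log]
    exact div_ne_zero (coe_sub_ne_zero (hUY hx) z) (coe_sub_ne_zero hy z)
  case trans =>
    rintro x y w hx hy hw ⟨α, hα, hα_exp⟩ ⟨β, hβ, hβ_exp⟩
    refine ⟨α + β, add_mem hα hβ, fun z => ?_⟩
    have hmul : ((z : ℂ) - x) / (z - y) * ((z - y) / (z - w)) = (z - x) / (z - w) :=
      div_mul_div_cancel₀ (coe_sub_ne_zero (hUY hy) z)
    refine ⟨?_, fun hre => ?_⟩
    · rw [ContinuousMap.add_apply, Complex.exp_add, (hα_exp z).1, (hβ_exp z).1, hmul]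
    · rw [ContinuousMap.add_apply, (hα_exp z).2 hre, (hβ_exp z).2 hre,
        ← log_mul_of_re_pos (hre x hx y hy) (hre y hy w hw), hmul]
  case symm =>
    rintro x y hx hy ⟨α, hα, hα_exp⟩
    refine ⟨-α, neg_mem hα, fun z => ⟨?_, fun hre => ?_⟩⟩
    · rw [ContinuousMap.neg_apply, Complex.exp_neg, (hα_exp z).1, inv_div]
    · rw [ContinuousMap.neg_apply, (hα_exp z).2 hre, ← log_inv_of_re_pos (hre x hx y hy), inv_div]

end Logarithms

/-! ### Square roots near a pole -/

section CauchyKernel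

/-- With `s` a branch of `√((z - a) / (z - b))`, this is `(2 / (√(z - a) + √(z - b)))²`. It behaves
like `1 / (z - b)` far from `a` and `b`, and unlike `1 / (z - b)` it stays bounded near them. -/
noncomputable def sqrtKernel (a b z s : ℂ) : ℂ :=
  8 / (a - b) ^ 2 * (z - (a + b) / 2 - (z - b) * s)

variable {a b z s : ℂ}

theorem sqrtKernel_sub_inv (hab : a ≠ b) (hzb : z ≠ b) (hs : s ^ 2 * (z - b) = z - a)
    (hs1 : s + 1 ≠ 0) :
    sqrtKernel a b z s - (z - b)⁻¹ = (a - b) * (s + 3) / ((z - b) ^ 2 * (s + 1) ^ 3) := by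
  have hzb' : z - b ≠ 0 := sub_ne_zero.2 hzb
  have hab_eq : a - b = (z - b) * ((1 - s) * (s + 1)) := by linear_combination hs
  have hmid : z - (a + b) / 2 = (z - b) * (s ^ 2 + 1) / 2 := by
    linear_combination (-1 / 2 : ℂ) * hs
  have hs' : 1 - s ≠ 0 := fun h => sub_ne_zero.2 hab (by rw [hab_eq, h]; ring)
  rw [sqrtKernel, hmid, hab_eq]
  field_simp
  ring

theorem norm_sqrtKernel_sub_inv_le (hab : a ≠ b) (hzb : z ≠ b) (hs : s ^ 2 * (z - b) = z - a)
    (hre : 0 < s.re) : ‖sqrtKernel a b z s - (z - b)⁻¹‖ ≤ 3 * ‖a - b‖ / ‖z - b‖ ^ 2 := by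
  have hs1 : 1 ≤ ‖s + 1‖ := by
    have := Complex.re_le_norm (s + 1)
    rw [Complex.add_re, Complex.one_re] at this
    linarith
  have hs3 : ‖s + 3‖ ≤ 3 * ‖s + 1‖ := by
    calc ‖s + 3‖ = ‖(s + 1) + 2‖ := by ring_nf
      _ ≤ ‖s + 1‖ + ‖(2 : ℂ)‖ := norm_add_le _ _
      _ ≤ 3 * ‖s + 1‖ := by rw [Complex.norm_ofNat]; linarith
  have hs0 : s + 1 ≠ 0 := norm_pos_iff.1 (by linarith)
  rw [sqrtKernel_sub_inv hab hzb hs hs0, norm_div, norm_mul, norm_mul, norm_pow, norm_pow]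
  have hzb' : 0 < ‖z - b‖ := norm_pos_iff.2 (sub_ne_zero.2 hzb)
  calc ‖a - b‖ * ‖s + 3‖ / (‖z - b‖ ^ 2 * ‖s + 1‖ ^ 3)
      ≤ ‖a - b‖ * (3 * ‖s + 1‖) / (‖z - b‖ ^ 2 * (‖s + 1‖ * 1)) := by
        gcongr
        rw [mul_one]
        exact le_self_pow₀ hs1 three_ne_zero
    _ = 3 * ‖a - b‖ / ‖z - b‖ ^ 2 := by field_simp

theorem norm_sqrtKernel_le {R : ℝ} (hs : s ^ 2 * (z - b) = z - a) (hza : ‖z - a‖ ≤ R)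
    (hzb : ‖z - b‖ ≤ R) : ‖sqrtKernel a b z s‖ ≤ 16 * R / ‖a - b‖ ^ 2 := by
  have hR : 0 ≤ R := (norm_nonneg _).trans hza
  have hmid : ‖z - (a + b) / 2‖ ≤ R := by
    calc ‖z - (a + b) / 2‖ = ‖(z - a) + (z - b)‖ / 2 := by
          rw [show z - (a + b) / 2 = ((z - a) + (z - b)) / 2 by ring, norm_div,
            Complex.norm_ofNat]
      _ ≤ R := by linarith [norm_add_le (z - a) (z - b)]
  have hroot : ‖(z - b) * s‖ ≤ R := by
    refine le_of_sq_le_sq ?_ hR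
    rw [← norm_pow, show ((z - b) * s) ^ 2 = (z - a) * (z - b) by
      linear_combination (z - b) * hs, norm_mul, sq]
    gcongr
  rw [sqrtKernel, norm_mul, norm_div, norm_pow, Complex.norm_ofNat]
  calc 8 / ‖a - b‖ ^ 2 * ‖z - (a + b) / 2 - (z - b) * s‖ ≤ 8 / ‖a - b‖ ^ 2 * (R + R) := by
        gcongr
        exact (norm_sub_le _ _).trans (add_le_add hmid hroot)
    _ = 16 * R / ‖a - b‖ ^ 2 := by ring

theorem rpow_neg_three_halves_eq {x : ℝ} (hx : 0 ≤ x) : x ^ (-(3 / 2) : ℝ) = (√x ^ 3)⁻¹ := by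
  rw [Real.rpow_neg hx, Real.sqrt_eq_rpow, ← Real.rpow_mul_natCast hx]
  norm_num

theorem div_add_inv_le_sqrt_mul_rpow {δ x : ℝ} (hδ : 0 < δ) (hx : 0 < x) (hxδ : x ≤ 9 * δ) :
    300 / δ + x⁻¹ ≤ 10000 * √δ * x ^ (-(3 / 2) : ℝ) := by
  rw [rpow_neg_three_halves_eq hx.le, ← div_eq_mul_inv, le_div_iff₀ (by positivity)]
  have hsqrt : √x ≤ 3 * √δ := by
    rw [show (3 : ℝ) = √9 by norm_num, ← Real.sqrt_mul (by norm_num)]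
    exact Real.sqrt_le_sqrt hxδ
  have hx3 : √x ^ 3 = x * √x := by rw [pow_succ, Real.sq_sqrt hx.le]
  calc (300 / δ + x⁻¹) * √x ^ 3 = (300 * (x / δ) + 1) * √x := by rw [hx3]; field_simp
    _ ≤ (300 * 9 + 1) * (3 * √δ) := by gcongr; exact (div_le_iff₀ hδ).2 hxδ
    _ ≤ 10000 * √δ := by nlinarith [Real.sqrt_nonneg δ]

theorem div_sq_le_sqrt_mul_rpow {δ x : ℝ} (hδ : 0 < δ) (hxδ : δ ≤ x) :
    32 * δ / x ^ 2 ≤ 10000 * √δ * x ^ (-(3 / 2) : ℝ) := by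
  have hx : 0 < x := hδ.trans_le hxδ
  have hx4 : x ^ 2 = √x ^ 3 * √x := by
    rw [← pow_succ, show 3 + 1 = 2 * 2 from rfl, pow_mul, Real.sq_sqrt hx.le]
  rw [rpow_neg_three_halves_eq hx.le, ← div_eq_mul_inv, hx4, ← div_div, div_right_comm]
  gcongr
  rw [div_le_iff₀ (Real.sqrt_pos.2 hx)]
  calc 32 * δ = 32 * (√δ * √δ) := by rw [Real.mul_self_sqrt hδ.le]
    _ ≤ 10000 * (√δ * √x) := by gcongr; norm_num
    _ = 10000 * √δ * √x := by ring

variable {ζ ζ' : ℂ} {δ : ℝ}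

theorem norm_sqrtKernel_sub_inv_le_of_far (hδ : 0 < δ) (ha : ‖a - ζ‖ < δ / 4) (hb : ‖b - ζ‖ < 2 * δ)
    (hab : a ≠ b) (hζ' : ‖ζ' - ζ‖ < δ / 4) (hz : 8 * δ ≤ ‖z - ζ‖)
    (hs : s ^ 2 * (z - b) = z - a) (hre : 0 < s.re) :
    ‖sqrtKernel a b z s - (z - ζ')⁻¹‖ ≤ 10000 * √δ * ‖z - ζ'‖ ^ (-(3 / 2) : ℝ) := by
  have dist_ab : ‖a - b‖ ≤ 9 / 4 * δ := by
    linarith [norm_sub_le_norm_sub_add_norm_sub a ζ b, norm_sub_rev b ζ]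
  have dist_bζ' : ‖b - ζ'‖ ≤ 9 / 4 * δ := by
    linarith [norm_sub_le_norm_sub_add_norm_sub b ζ ζ', norm_sub_rev ζ' ζ]
  have dist_zb : 6 * δ ≤ ‖z - b‖ := by linarith [norm_sub_le_norm_sub_add_norm_sub z b ζ]
  have dist_zζ' : 7 * δ ≤ ‖z - ζ'‖ := by linarith [norm_sub_le_norm_sub_add_norm_sub z ζ' ζ]
  have half_le : ‖z - ζ'‖ / 2 ≤ ‖z - b‖ := by
    linarith [norm_sub_le_norm_sub_add_norm_sub z b ζ']
  have hzb : z - b ≠ 0 := norm_pos_iff.1 (by linarith)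
  have hzζ' : z - ζ' ≠ 0 := norm_pos_iff.1 (by linarith)
  refine le_trans ?_ (div_sq_le_sqrt_mul_rpow hδ (x := ‖z - ζ'‖) (by linarith))
  set x := ‖z - ζ'‖
  have hx : 0 < x := by linarith
  calc ‖sqrtKernel a b z s - (z - ζ')⁻¹‖
      ≤ ‖sqrtKernel a b z s - (z - b)⁻¹‖ + ‖(z - b)⁻¹ - (z - ζ')⁻¹‖ :=
        norm_sub_le_norm_sub_add_norm_sub _ _ _
    _ ≤ 3 * ‖a - b‖ / ‖z - b‖ ^ 2 + ‖b - ζ'‖ / (‖z - b‖ * x) := by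
        gcongr
        · exact norm_sqrtKernel_sub_inv_le hab (sub_ne_zero.1 hzb) hs hre
        · rw [inv_sub_inv hzb hzζ', norm_div, norm_mul, sub_sub_sub_cancel_left]
    _ ≤ 3 * (9 / 4 * δ) / (x / 2) ^ 2 + 9 / 4 * δ / (x / 2 * x) := by gcongr
    _ = 63 / 2 * (δ / x ^ 2) := by field_simp; norm_num
    _ ≤ 32 * (δ / x ^ 2) := by gcongr; norm_num
    _ = 32 * δ / x ^ 2 := by ring

theorem norm_sqrtKernel_sub_inv_le_of_near (hδ : 0 < δ) (ha : ‖a - ζ‖ < δ / 4)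
    (hb : ‖b - ζ‖ < 2 * δ) (hb' : δ ≤ ‖b - ζ‖) (hζ' : ‖ζ' - ζ‖ < δ / 4) (hzζ' : z ≠ ζ')
    (hz : ‖z - ζ‖ < 8 * δ) (hs : s ^ 2 * (z - b) = z - a) :
    ‖sqrtKernel a b z s - (z - ζ')⁻¹‖ ≤ 10000 * √δ * ‖z - ζ'‖ ^ (-(3 / 2) : ℝ) := by
  have dist_ab : 3 / 4 * δ ≤ ‖a - b‖ := by
    linarith [norm_sub_le_norm_sub_add_norm_sub b a ζ, norm_sub_rev b a]
  have dist_za : ‖z - a‖ ≤ 10 * δ := by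
    linarith [norm_sub_le_norm_sub_add_norm_sub z ζ a, norm_sub_rev a ζ]
  have dist_zb : ‖z - b‖ ≤ 10 * δ := by
    linarith [norm_sub_le_norm_sub_add_norm_sub z ζ b, norm_sub_rev b ζ]
  have dist_zζ' : ‖z - ζ'‖ ≤ 9 * δ := by
    linarith [norm_sub_le_norm_sub_add_norm_sub z ζ ζ', norm_sub_rev ζ' ζ]
  refine le_trans ?_ (div_add_inv_le_sqrt_mul_rpow hδ (norm_pos_iff.2 (sub_ne_zero.2 hzζ'))
    dist_zζ')
  calc ‖sqrtKernel a b z s - (z - ζ')⁻¹‖ ≤ ‖sqrtKernel a b z s‖ + ‖(z - ζ')⁻¹‖ := norm_sub_le _ _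
    _ ≤ 16 * (10 * δ) / (3 / 4 * δ) ^ 2 + ‖z - ζ'‖⁻¹ := by
        rw [norm_inv]
        gcongr
        exact (norm_sqrtKernel_le hs dist_za dist_zb).trans (by gcongr)
    _ = 2560 / 9 / δ + ‖z - ζ'‖⁻¹ := by congr 1; field_simp; norm_num
    _ ≤ 300 / δ + ‖z - ζ'‖⁻¹ := by gcongr; norm_num

theorem re_exp_half_log_pos {w : ℂ} (hw : 0 < w.re) : 0 < (Complex.exp (Complex.log w / 2)).re := by
  have harg := abs_lt.1 (Complex.abs_arg_lt_pi_div_two_iff.2 (.inl hw))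
  have him : (Complex.log w / 2).im = w.arg / 2 := by
    rw [← Complex.log_im]
    exact Complex.div_ofNat_im _ 2
  rw [Complex.exp_re, him]
  exact mul_pos (Real.exp_pos _)
    (Real.cos_pos_of_mem_Ioo ⟨by linarith [Real.pi_pos], by linarith [Real.pi_pos]⟩)

theorem re_div_pos_of_norm_sub_lt {p q : ℂ} (h : ‖q - p‖ < ‖z - q‖) :
    0 < ((z - p) / (z - q)).re := by
  have hzq : 0 < ‖z - q‖ := (norm_nonneg _).trans_lt h
  have hsplit : (z - p) / (z - q) = 1 + (q - p) / (z - q) := by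
    have := norm_pos_iff.1 hzq
    field_simp
    ring
  have hlt : ‖(q - p) / (z - q)‖ < 1 := by rwa [norm_div, div_lt_one hzq]
  rw [hsplit, Complex.add_re, Complex.one_re]
  linarith [neg_abs_le ((q - p) / (z - q)).re, Complex.abs_re_le_norm ((q - p) / (z - q))]

/-- The square root of `(z - a) / (z - b)` has a single-valued branch on `Y` because `a` and `b`
lie in the connected set `U` outside `Y`. -/
theorem exists_mem_rationalAlgebra_norm_sub_inv_le {Y U : Set ℂ} [CompactSpace Y] (hδ : 0 < δ)
    (hU : IsPreconnected U) (hUY : U ⊆ Yᶜ) (hUζ : U ⊆ ball ζ (2 * δ)) (ha : a ∈ U) (hb : b ∈ U)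
    (haζ : ‖a - ζ‖ < δ / 4) (hbζ : δ ≤ ‖b - ζ‖) :
    ∃ Q ∈ rationalAlgebra Y, ∀ z : Y, ∀ ζ' ∈ ball ζ (δ / 4), (z : ℂ) ≠ ζ' →
      ‖Q z - ((z : ℂ) - ζ')⁻¹‖ ≤ 10000 * √δ * ‖(z : ℂ) - ζ'‖ ^ (-(3 / 2) : ℝ) := by
  obtain ⟨α, hα, hα_exp⟩ := exists_mem_rationalAlgebra_exp_eq hU hUY ha hb
  obtain ⟨s, hs, hs_exp⟩ := exists_mem_eq_exp isClosed_rationalAlgebra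
    (Subalgebra.smul_mem _ hα (1 / 2 : ℂ))
  let Q : C(Y, ℂ) := (8 / (a - b) ^ 2 : ℂ) • (coord Y - algebraMap ℂ _ ((a + b) / 2) -
    (coord Y - algebraMap ℂ _ b) * s)
  have hQ : Q ∈ rationalAlgebra Y := by
    have hc := coord_mem_rationalAlgebra (Y := Y)
    exact Subalgebra.smul_mem _ (sub_mem (sub_mem hc (algebraMap_mem _ _))
      (mul_mem (sub_mem hc (algebraMap_mem _ _)) hs)) _
  refine ⟨Q, hQ, fun z ζ' hζ' hzζ' => ?_⟩
  have norm_sub_lt : ∀ p ∈ U, ‖p - ζ‖ < 2 * δ := fun p hp => mem_ball_iff_norm.1 (hUζ hp)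
  have hab : a ≠ b := by
    rintro rfl
    linarith
  have hs_half : s z = Complex.exp (α z / 2) := by
    rw [hs_exp, ContinuousMap.smul_apply, smul_eq_mul, one_div_mul_eq_div]
  have hs_sq : s z ^ 2 * (z - b) = z - a := by
    rw [hs_half, ← Complex.exp_nat_mul, Nat.cast_ofNat, mul_div_cancel₀ _ two_ne_zero,
      (hα_exp z).1, div_mul_cancel₀ _ (coe_sub_ne_zero (hUY hb) z)]
  change ‖sqrtKernel a b z (s z) - _‖ ≤ _
  rcases le_or_gt (8 * δ) ‖(z : ℂ) - ζ‖ with hz | hz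
  · have hre : ∀ p ∈ U, ∀ q ∈ U, 0 < (((z : ℂ) - p) / (z - q)).re := fun p hp q hq =>
      re_div_pos_of_norm_sub_lt <| by
        linarith [norm_sub_lt p hp, norm_sub_lt q hq, norm_sub_rev p ζ,
          norm_sub_le_norm_sub_add_norm_sub q ζ p, norm_sub_le_norm_sub_add_norm_sub (z : ℂ) q ζ]
    refine norm_sqrtKernel_sub_inv_le_of_far hδ haζ (norm_sub_lt b hb) hab
      (mem_ball_iff_norm.1 hζ') hz hs_sq ?_
    rw [hs_half, (hα_exp z).2 hre]
    exact re_exp_half_log_pos (hre a ha b hb)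
  · exact norm_sqrtKernel_sub_inv_le_of_near hδ haζ (norm_sub_lt b hb) hbζ
      (mem_ball_iff_norm.1 hζ') hzζ' hz hs_sq

theorem exists_mem_connectedComponentIn_inter_ball {V : Set ℂ} (hV : IsOpen V) {r R : ℝ}
    (hrR : r < R) (haV : a ∈ V) (haR : a ∈ ball ζ R)
    (hcomp : ¬ connectedComponentIn V a ⊆ ball ζ R) :
    ∃ b ∈ connectedComponentIn (V ∩ ball ζ R) a, r ≤ ‖b - ζ‖ := by
  by_contra! hsmall
  have haVR : a ∈ V ∩ ball ζ R := ⟨haV, haR⟩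
  have hUV := connectedComponentIn_subset (V ∩ ball ζ R) a
  have haU := mem_connectedComponentIn haVR
  set U := connectedComponentIn (V ∩ ball ζ R) a
  have hclosure : closure U ⊆ ball ζ R :=
    (closure_minimal (fun x hx => mem_closedBall_iff_norm.2 (hsmall x hx).le)
      isClosed_closedBall).trans (closedBall_subset_ball hrR)
  refine hcomp (subset_trans ?_ (hUV.trans inter_subset_right))
  refine isPreconnected_connectedComponentIn.subset_of_closure_inter_subset
    (hV.inter isOpen_ball).connectedComponentIn ⟨a, mem_connectedComponentIn haV, haU⟩ ?_
  rintro x ⟨hxU, hxV⟩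
  have hinsert : IsPreconnected (insert x U) :=
    isPreconnected_connectedComponentIn.subset_closure (subset_insert _ _)
      (insert_subset hxU subset_closure)
  have hxVR : x ∈ V ∩ ball ζ R := ⟨connectedComponentIn_subset _ _ hxV, hclosure hxU⟩
  exact hinsert.subset_connectedComponentIn (mem_insert_of_mem _ haU) (insert_subset hxVR hUV)
    (mem_insert _ _)

end CauchyKernel

/-! ### The Cauchy transform of a disc -/

section PolarCoordinates

open MeasureTheory Real

variable {E : Type*} [NormedAddCommGroup E] [NormedSpace ℝ E] {f : ℂ → E}

theorem polarCoord_symm_eq_circleMap (p : ℝ × ℝ) :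
    Complex.polarCoord.symm p = circleMap 0 p.1 p.2 := by
  simp [Complex.polarCoord_symm_apply, circleMap, Complex.exp_mul_I]

theorem integrableOn_smul_comp_circleMap (hf : Integrable f) (hfm : StronglyMeasurable f) :
    IntegrableOn (fun p : ℝ × ℝ => p.1 • f (circleMap 0 p.1 p.2)) (Ioi 0 ×ˢ Ioo (-π) π) := by
  have hcont : Continuous fun p : ℝ × ℝ => circleMap 0 p.1 p.2 := by
    unfold circleMap
    fun_prop
  refine ⟨(measurable_fst.stronglyMeasurable.smul
    (hfm.comp_measurable hcont.measurable)).aestronglyMeasurable, ?_⟩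
  have henorm : ∫⁻ p in Ioi (0 : ℝ) ×ˢ Ioo (-π) π, ‖p.1 • f (circleMap 0 p.1 p.2)‖ₑ =
      ∫⁻ z, ‖f z‖ₑ := by
    rw [← Complex.lintegral_comp_polarCoord_symm, polarCoord_target]
    refine setLIntegral_congr_fun (measurableSet_Ioi.prod measurableSet_Ioo) fun p hp => ?_
    rw [polarCoord_symm_eq_circleMap, enorm_smul, smul_eq_mul, enorm_of_nonneg (le_of_lt hp.1)]
  exact henorm.trans_lt hf.2

theorem integral_circleMap_Ioo (f : ℂ → E) (c : ℂ) (ρ : ℝ) :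
    ∫ θ in Ioo (-π) π, f (circleMap c ρ θ) = (2 * π) • circleAverage f c ρ := by
  rw [circleAverage_eq_integral_add (-π), smul_inv_smul₀ two_pi_pos.ne',
    intervalIntegral.integral_comp_add_right (fun θ => f (circleMap c ρ θ)),
    ← integral_Ioc_eq_integral_Ioo, ← intervalIntegral.integral_of_le (by linarith [pi_pos])]
  congr 1 <;> ring

theorem integral_eq_integral_Ioi_smul_circleAverage (hf : Integrable f)
    (hfm : StronglyMeasurable f) :
    ∫ z, f z = ∫ ρ in Ioi (0 : ℝ), (2 * π * ρ) • circleAverage f 0 ρ := by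
  rw [← Complex.integral_comp_polarCoord_symm, polarCoord_target]
  simp only [polarCoord_symm_eq_circleMap]
  rw [Measure.volume_eq_prod, setIntegral_prod _ (integrableOn_smul_comp_circleMap hf hfm)]
  refine setIntegral_congr_fun measurableSet_Ioi fun ρ _ => ?_
  simp only [integral_smul, integral_circleMap_Ioo, smul_smul, mul_comm]

end PolarCoordinates

section CauchyTransform

open MeasureTheory Real

variable {w z c : ℂ} {r ρ : ℝ} {D : Set ℂ}

theorem circleAverage_div_sub_of_lt_norm (hρ : 0 ≤ ρ) (h : ρ < ‖w‖) :
    circleAverage (fun ζ => w / (w - ζ)) 0 ρ = 1 := by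
  have hw : w ≠ 0 := norm_pos_iff.1 (hρ.trans_lt h)
  have hdiff : DiffContOnCl ℂ (fun ζ => w / (w - ζ)) (ball 0 |ρ|) := by
    refine DifferentiableOn.diffContOnCl fun ζ hζ => ?_
    have hζρ : ‖ζ‖ ≤ ρ := by
      simpa [abs_of_nonneg hρ] using closure_ball_subset_closedBall hζ
    have hne : w - ζ ≠ 0 := sub_ne_zero.2 fun hwζ => (hwζ ▸ h).not_ge hζρ
    fun_prop (disch := assumption)
  rw [hdiff.circleAverage, sub_zero, div_self hw]

theorem circleAverage_div_sub_of_norm_lt (h : ‖w‖ < ρ) :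
    circleAverage (fun ζ => w / (w - ζ)) 0 ρ = 0 := by
  have hρ : 0 < ρ := (norm_nonneg w).trans_lt h
  have hne : ∀ ζ ∈ sphere (0 : ℂ) |ρ|, ζ - w ≠ 0 := by
    rintro ζ hζ hζw
    rw [sub_eq_zero.1 hζw, abs_of_pos hρ, mem_sphere_zero_iff_norm] at hζ
    exact h.ne hζ
  have hmean := (diffContOnCl_const (c := (1 : ℂ)) (s := ball (0 : ℂ) |ρ|)).circleAverage_smul_div
    (w := w) (by simpa [abs_of_pos hρ] using h)
  have hcongr : circleAverage (fun ζ => w / (w - ζ)) 0 ρ =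
      circleAverage ((fun _ => (1 : ℂ)) - fun ζ => ((ζ - 0) / (ζ - w)) • (1 : ℂ)) 0 ρ := by
    refine circleAverage_congr_sphere fun ζ hζ => ?_
    have hζw := hne ζ hζ
    rw [← neg_sub ζ w, Pi.sub_apply, sub_zero, smul_eq_mul, mul_one]
    field_simp
    ring
  rw [hcongr, circleAverage_sub (circleIntegrable_const _ _ _), hmean, circleAverage_const,
    sub_self]
  refine ContinuousOn.circleIntegrable' fun ζ hζ => ContinuousAt.continuousWithinAt ?_
  have hζw := hne ζ hζ
  fun_prop (disch := assumption)

theorem integrableOn_comp_sub_left_of_norm_le_rpow {E : Type*} [NormedAddCommGroup E] {f : ℂ → E}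
    {α C : ℝ} (hα : α < 2) (hf : AEStronglyMeasurable f) (hbound : ∀ x, ‖f x‖ ≤ C * ‖x‖ ^ (-α))
    (z : ℂ) (hD : IsBounded D) : IntegrableOn (fun ζ => f (z - ζ)) D := by
  obtain ⟨r, hr⟩ := hD.subset_ball z
  have hball : IntegrableOn f (ball 0 r) :=
    integrableOn_ball_of_norm_le_rpow (by simp) (by simpa using hα) (.of_forall hbound) hf
  refine (((Measure.measurePreserving_sub_left volume z).integrableOn_comp_preimage
    (Homeomorph.subLeft z).measurableEmbedding).2 hball).mono_set fun ζ hζ => ?_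
  simpa [dist_eq_norm, norm_sub_rev] using hr hζ

theorem integrableOn_sub_inv (z : ℂ) (hD : IsBounded D) :
    IntegrableOn (fun ζ => (z - ζ)⁻¹) D := by
  refine integrableOn_comp_sub_left_of_norm_le_rpow (f := fun w => w⁻¹) (C := 1) one_lt_two
    measurable_inv.aestronglyMeasurable (fun x => ?_) z hD
  rw [norm_inv, rpow_neg_one, one_mul]

theorem integrableOn_norm_sub_rpow_neg {α : ℝ} (hα : α < 2) (z : ℂ) (hD : IsBounded D) :
    IntegrableOn (fun ζ => ‖z - ζ‖ ^ (-α)) D := by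
  refine integrableOn_comp_sub_left_of_norm_le_rpow (f := fun w : ℂ => ‖w‖ ^ (-α)) (C := 1) hα
    (measurable_norm.pow_const _).aestronglyMeasurable (fun x => ?_) z hD
  rw [norm_of_nonneg (by positivity), one_mul]

theorem exists_forall_integral_norm_sub_rpow_neg_le {Y : Set ℂ} {α : ℝ} (hα : α < 2)
    (hY : IsBounded Y) (hD : IsBounded D) :
    ∃ M, 0 ≤ M ∧ ∀ z ∈ Y, ∫ ζ in D, ‖z - ζ‖ ^ (-α) ≤ M := by
  obtain ⟨r, hr⟩ := (hY.sub hD).subset_ball 0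
  refine ⟨∫ w in ball (0 : ℂ) r, ‖w‖ ^ (-α), integral_nonneg fun w => by positivity,
    fun z hz => ?_⟩
  rw [← (Measure.measurePreserving_sub_left volume z).setIntegral_preimage_emb
    (Homeomorph.subLeft z).measurableEmbedding (fun w => ‖w‖ ^ (-α))]
  refine setIntegral_mono_set (integrableOn_norm_sub_rpow_neg hα z ?_)
    (.of_forall fun ζ => by positivity)
    (LE.le.eventuallyLE fun ζ hζ => hr (sub_mem_sub hz hζ))
  refine (isBounded_ball (x := z) (r := r)).subset fun ζ hζ => ?_
  simpa [dist_eq_norm, norm_sub_rev] using hζ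

theorem circleAverage_indicator_ball_div_sub (hρ : 0 < ρ) (hρw : ρ ≠ ‖w‖) :
    circleAverage ((ball (0 : ℂ) r).indicator fun ζ => w / (w - ζ)) 0 ρ =
      (Iio (min r ‖w‖)).indicator 1 ρ := by
  have norm_eq : ∀ ζ ∈ sphere (0 : ℂ) |ρ|, ‖ζ‖ = ρ := fun ζ hζ => by
    rwa [mem_sphere_zero_iff_norm, abs_of_pos hρ] at hζ
  rcases lt_or_ge ρ r with hρr | hrρ
  · rw [circleAverage_congr_sphere (f₂ := fun ζ => w / (w - ζ)) fun ζ hζ =>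
      indicator_of_mem (mem_ball_zero_iff.2 ((norm_eq ζ hζ).trans_lt hρr)) _]
    rcases hρw.lt_or_gt with hlt | hgt
    · rw [circleAverage_div_sub_of_lt_norm hρ.le hlt,
        indicator_of_mem (mem_Iio.2 (lt_min hρr hlt)), Pi.one_apply]
    · rw [circleAverage_div_sub_of_norm_lt hgt, indicator_of_notMem]
      exact fun h => (h.trans_le (min_le_right _ _)).not_gt hgt
  · rw [circleAverage_congr_sphere (f₂ := fun _ => 0) fun ζ hζ => indicator_of_notMem
        (fun h => (mem_ball_zero_iff.1 h).not_ge (hrρ.trans_eq (norm_eq ζ hζ).symm)) _,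
      circleAverage_const, indicator_of_notMem]
    exact fun h => (h.trans_le (min_le_left _ _)).not_ge hrρ

theorem integral_ball_zero_div_sub (hr : 0 ≤ r) :
    ∫ ζ in ball 0 r, w / (w - ζ) = ((π * min r ‖w‖ ^ 2 : ℝ) : ℂ) := by
  have hmeas : StronglyMeasurable ((ball (0 : ℂ) r).indicator fun ζ => w / (w - ζ)) :=
    (Measurable.indicator (by fun_prop) measurableSet_ball).stronglyMeasurable
  have hint : IntegrableOn (fun ζ => w / (w - ζ)) (ball 0 r) := by
    simpa only [div_eq_mul_inv] using! (integrableOn_sub_inv w isBounded_ball).const_mul w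
  have haverage : ∀ᵐ ρ ∂volume.restrict (Ioi 0),
      (2 * π * ρ) • circleAverage ((ball (0 : ℂ) r).indicator fun ζ => w / (w - ζ)) 0 ρ =
        (Iio (min r ‖w‖)).indicator (fun ρ => ((2 * π * ρ : ℝ) : ℂ)) ρ := by
    filter_upwards [ae_restrict_mem measurableSet_Ioi,
      ae_restrict_of_ae (Measure.ae_ne volume ‖w‖)] with ρ hρ hρw
    rw [circleAverage_indicator_ball_div_sub hρ hρw]
    by_cases hmin : ρ ∈ Iio (min r ‖w‖) <;> simp [hmin]
  rw [← integral_indicator measurableSet_ball, integral_eq_integral_Ioi_smul_circleAverage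
      ((integrable_indicator_iff measurableSet_ball).2 hint) hmeas,
    integral_congr_ae haverage, setIntegral_indicator measurableSet_Iio, Ioi_inter_Iio,
    ← integral_Ioc_eq_integral_Ioo,
    ← intervalIntegral.integral_of_le (le_min hr (norm_nonneg _)),
    intervalIntegral.integral_ofReal, intervalIntegral.integral_const_mul, integral_id]
  congr 1
  ring

theorem mul_integral_ball_sub_inv (z c : ℂ) (hr : 0 ≤ r) :
    (z - c) * ∫ ζ in ball c r, (z - ζ)⁻¹ = ((π * min r ‖z - c‖ ^ 2 : ℝ) : ℂ) := by
  have hpreimage : (fun ζ => ζ - c) ⁻¹' ball 0 r = ball c r := by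
    ext ζ
    simp [dist_eq_norm]
  rw [← integral_ball_zero_div_sub hr, ← integral_const_mul,
    ← (measurePreserving_sub_right volume c).setIntegral_preimage_emb
      (Homeomorph.subRight c).measurableEmbedding (fun ζ => (z - c) / (z - c - ζ)) (ball 0 r),
    hpreimage]
  simp only [sub_sub_sub_cancel_right, div_eq_mul_inv]

end CauchyTransform

/-! ### Functions vanishing on the interior lie in the rational algebra -/

section StoneWeierstrass

open ContinuousMap

variable {𝕜 X : Type*} [RCLike 𝕜] [TopologicalSpace X] [CompactSpace X]

/-- Stone–Weierstrass on the quotient of `X` that identifies the points not separated by the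
self-conjugate part of `A`. -/
theorem mem_of_forall_eq_of_forall_star_mem {A : Subalgebra 𝕜 C(X, 𝕜)}
    (hA : IsClosed (A : Set C(X, 𝕜))) {f : C(X, 𝕜)}
    (hf : ∀ x y, (∀ u ∈ A, star u ∈ A → u x = u y) → f x = f y) : f ∈ A := by
  let s : Setoid X :=
    { r := fun x y => ∀ u ∈ A, star u ∈ A → u x = u y
      iseqv := ⟨fun _ _ _ _ => rfl, fun h u hu hu' => (h u hu hu').symm,
        fun h h' u hu hu' => (h u hu hu').trans (h' u hu hu')⟩ }
  let π : C(X, Quotient s) := ⟨Quotient.mk s, continuous_quotient_mk'⟩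
  let B : StarSubalgebra 𝕜 C(Quotient s, 𝕜) :=
    { carrier := {u | u.comp π ∈ A ∧ star (u.comp π) ∈ A}
      mul_mem' := fun hu hv => ⟨A.mul_mem hu.1 hv.1, by
        simpa only [mul_comp, star_mul] using! A.mul_mem hv.2 hu.2⟩
      add_mem' := fun hu hv => ⟨A.add_mem hu.1 hv.1, by
        simpa only [add_comp, star_add] using! A.add_mem hu.2 hv.2⟩
      algebraMap_mem' := fun a => ⟨A.algebraMap_mem a, A.algebraMap_mem (star a)⟩
      star_mem' := fun {u} hu => ⟨hu.2, (star_star (u.comp π)).symm ▸ hu.1⟩ }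
  have hB : IsClosed (B : Set C(Quotient s, 𝕜)) := by
    have hπ : Continuous fun u : C(Quotient s, 𝕜) => u.comp π := continuous_precomp π
    exact (hA.preimage hπ).inter (hA.preimage (continuous_star.comp hπ))
  have hsep : B.SeparatesPoints := by
    intro p q
    induction p, q using Quotient.inductionOn₂ with | _ x y
    intro hxy
    have hnot : ¬ ∀ u ∈ A, star u ∈ A → u x = u y := fun h => hxy (Quotient.sound h)
    push Not at hnot
    obtain ⟨u, hu, hu', hne⟩ := hnot
    let v : C(Quotient s, 𝕜) := ⟨Quotient.lift u fun a b h => h u hu hu',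
      u.continuous.quotient_lift _⟩
    exact ⟨v, ⟨v, ⟨hu, hu'⟩, rfl⟩, hne⟩
  have htop : B = ⊤ := by
    rw [← starSubalgebra_topologicalClosure_eq_top_of_separatesPoints B hsep]
    exact (le_antisymm (B.topologicalClosure_minimal le_rfl hB) B.le_topologicalClosure).symm
  let v : C(Quotient s, 𝕜) := ⟨Quotient.lift f hf, f.continuous.quotient_lift _⟩
  have hv : v ∈ B := htop ▸ StarSubalgebra.mem_top
  exact hv.1

end StoneWeierstrass

section CauchyTransformApproximation

open MeasureTheory

variable {Y : Set ℂ} {A : Submodule ℂ C(Y, ℂ)} {α C ε : ℝ} {D : Set ℂ}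

theorem exists_mem_norm_sub_setIntegral_le_of_subset_ball (hα : α < 2) (hD : MeasurableSet D)
    (hDb : IsBounded D) {Q : C(Y, ℂ)} (hQA : Q ∈ A)
    (hQ : ∀ z : Y, ∀ ζ ∈ D, (z : ℂ) ≠ ζ → ‖Q z - (z - ζ)⁻¹‖ ≤ C * ‖z - ζ‖ ^ (-α)) :
    ∃ P ∈ A, ∀ z : Y,
      ‖P z - ∫ ζ in D, (z - ζ)⁻¹‖ ≤ C * ∫ ζ in D, ‖z - ζ‖ ^ (-α) := by
  refine ⟨(volume.real D : ℂ) • Q, A.smul_mem _ hQA, fun z => ?_⟩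
  have hconst : ((volume.real D : ℂ) • Q) z = ∫ _ in D, Q z := by simp
  have hint : IntegrableOn (fun _ => Q z) D := integrableOn_const hDb.measure_lt_top.ne
  rw [hconst, ← integral_sub hint (integrableOn_sub_inv _ hDb), ← integral_const_mul]
  refine norm_integral_le_of_norm_le ((integrableOn_norm_sub_rpow_neg hα _ hDb).const_mul _) ?_
  filter_upwards [ae_restrict_mem hD, ae_restrict_of_ae (Measure.ae_ne volume (z : ℂ))]
    with ζ hζ hζz
  exact hQ z ζ hζ hζz.symm

theorem exists_mem_norm_sub_setIntegral_le (hα : α < 2) (t : Finset ℂ)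
    (hQ : ∀ c ∈ t, ∃ Q ∈ A, ∀ z : Y, ∀ ζ ∈ ball c ε, (z : ℂ) ≠ ζ →
      ‖Q z - (z - ζ)⁻¹‖ ≤ C * ‖z - ζ‖ ^ (-α))
    (hD : MeasurableSet D) (hDb : IsBounded D) (hDt : D ⊆ ⋃ c ∈ t, ball c ε) :
    ∃ P ∈ A, ∀ z : Y,
      ‖P z - ∫ ζ in D, (z - ζ)⁻¹‖ ≤ C * ∫ ζ in D, ‖z - ζ‖ ^ (-α) := by
  classical
  induction t using Finset.induction_on generalizing D with
  | empty =>
    obtain rfl : D = ∅ := by simpa using hDt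
    exact ⟨0, A.zero_mem, fun z => by simp⟩
  | insert c t _ ih =>
    obtain ⟨Q, hQA, hQc⟩ := hQ c (Finset.mem_insert_self _ _)
    obtain ⟨P₁, hP₁A, hP₁⟩ := exists_mem_norm_sub_setIntegral_le_of_subset_ball hα
      (hD.inter (measurableSet_ball (x := c) (ε := ε))) (hDb.subset inter_subset_left) hQA
      fun z ζ hζ => hQc z ζ hζ.2
    obtain ⟨P₂, hP₂A, hP₂⟩ := ih (fun c' hc' => hQ c' (Finset.mem_insert_of_mem hc'))
      (hD.diff (measurableSet_ball (x := c) (ε := ε))) (hDb.subset sdiff_subset) fun ζ hζ => by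
        have hζt := hDt hζ.1
        rw [Finset.set_biUnion_insert] at hζt
        exact hζt.resolve_left hζ.2
    refine ⟨P₁ + P₂, A.add_mem hP₁A hP₂A, fun z => ?_⟩
    rw [← integral_inter_add_sdiff measurableSet_ball (integrableOn_sub_inv (z : ℂ) hDb),
      ← integral_inter_add_sdiff measurableSet_ball (integrableOn_norm_sub_rpow_neg hα (z : ℂ) hDb),
      mul_add, ContinuousMap.add_apply, add_sub_add_comm]
    exact (norm_add_le _ _).trans (add_le_add (hP₁ z) (hP₂ z))

end CauchyTransformApproximation

section TruncatedSqDist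

open MeasureTheory Real

variable {Y Ω : Set ℂ} {c : ℂ} {r : ℝ}

/-- The squared distance to `c`, truncated at radius `r`, as a complex-valued function on `Y`. Up to
the factor `π / (z - c)` it is the Cauchy transform of the disc `ball c r`. -/
noncomputable def truncatedSqDist (Y : Set ℂ) (c : ℂ) (r : ℝ) : C(Y, ℂ) :=
  ⟨fun z => ((min r ‖(z : ℂ) - c‖ ^ 2 : ℝ) : ℂ), by fun_prop⟩

theorem star_truncatedSqDist : star (truncatedSqDist Y c r) = truncatedSqDist Y c r :=
  ContinuousMap.ext fun _ => Complex.conj_ofReal _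

theorem truncatedSqDist_apply_eq_zero_iff (hr : 0 < r) {z : Y} :
    truncatedSqDist Y c r z = 0 ↔ (z : ℂ) = c := by
  have hmin : min r ‖(z : ℂ) - c‖ = 0 ↔ ‖(z : ℂ) - c‖ = 0 := by
    rcases min_cases r ‖(z : ℂ) - c‖ with ⟨h, hle⟩ | ⟨h, -⟩ <;> rw [h]
    exact iff_of_false hr.ne' (hr.trans_le hle).ne'
  rw [← sub_eq_zero (b := c), ← norm_eq_zero (a := (z : ℂ) - c), ← hmin]
  simp [truncatedSqDist]

theorem truncatedSqDist_apply_eq_mul_integral (hr : 0 ≤ r) (z : Y) :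
    truncatedSqDist Y c r z = (π⁻¹ : ℝ) * ((z - c) * ∫ ζ in ball c r, (z - ζ)⁻¹) := by
  rw [mul_integral_ball_sub_inv _ _ hr, ← Complex.ofReal_mul, inv_mul_cancel_left₀ pi_ne_zero]
  rfl

theorem OmegaConvex.not_connectedComponentIn_subset (hY : OmegaConvex Ω Y) {q : ℂ} (hq : q ∉ Y)
    {S : Set ℂ} (hS : IsBounded S) (hSΩ : S ⊆ Ω) : ¬ connectedComponentIn Yᶜ q ⊆ S := fun hsub =>
  have ⟨_, hx, hxΩ⟩ := hY _ ⟨⟨q, hq, rfl⟩, hS.subset hsub⟩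
  hxΩ (hSΩ (hsub hx))

variable [CompactSpace Y]

/-- Each centre `ζ` has points of one component of the complement both near it and at distance
at least `δ`, since no such component is trapped in `ball ζ (2 * δ)`. -/
theorem exists_mem_rationalAlgebra_norm_sub_integral_ball_le (hY : OmegaConvex Ω Y)
    {δ : ℝ} (hδ : 0 < δ) (hball : thickening (2 * δ) (closedBall c r) ⊆ Ω)
    (hdense : closedBall c r ⊆ closure Yᶜ) :
    ∃ P ∈ rationalAlgebra Y, ∀ z : Y, ‖P z - ∫ ζ in ball c r, (z - ζ)⁻¹‖ ≤
      10000 * √δ * ∫ ζ in ball c r, ‖z - ζ‖ ^ (-(3 / 2) : ℝ) := by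
  have hYc : IsOpen Yᶜ := (isCompact_iff_compactSpace.2 ‹_›).isClosed.isOpen_compl
  obtain ⟨t, ht, htc⟩ := (isCompact_closedBall c r).elim_nhds_subcover (fun ζ => ball ζ (δ / 4))
    fun ζ _ => ball_mem_nhds ζ (by positivity)
  refine exists_mem_norm_sub_setIntegral_le (A := Subalgebra.toSubmodule (rationalAlgebra Y))
    (by norm_num) t (fun ζ hζ => ?_) measurableSet_ball isBounded_ball
    (ball_subset_closedBall.trans htc)
  obtain ⟨a, haζ, haY⟩ := mem_closure_iff.1 (hdense (ht ζ hζ)) (ball ζ (δ / 4)) isOpen_ball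
    (mem_ball_self (by positivity))
  have hζΩ : ball ζ (2 * δ) ⊆ Ω := (ball_subset_thickening (ht ζ hζ) _).trans hball
  obtain ⟨b, hb, hbζ⟩ := exists_mem_connectedComponentIn_inter_ball hYc (by linarith) haY
    (ball_subset_ball (by linarith) haζ) (hY.not_connectedComponentIn_subset haY isBounded_ball hζΩ)
  have hsub := connectedComponentIn_subset (Yᶜ ∩ ball ζ (2 * δ)) a
  have ha := mem_connectedComponentIn (F := Yᶜ ∩ ball ζ (2 * δ)) ⟨haY,
    ball_subset_ball (by linarith) haζ⟩
  exact exists_mem_rationalAlgebra_norm_sub_inv_le hδ isPreconnected_connectedComponentIn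
    (hsub.trans inter_subset_left) (hsub.trans inter_subset_right) ha hb
    (mem_ball_iff_norm.1 haζ) hbζ

theorem truncatedSqDist_mem_rationalAlgebra (hΩ : IsOpen Ω) (hY : OmegaConvex Ω Y) (hr : 0 ≤ r)
    (hball : closedBall c r ⊆ Ω) (hdense : closedBall c r ⊆ closure Yᶜ) :
    truncatedSqDist Y c r ∈ rationalAlgebra Y := by
  obtain ⟨δ₀, hδ₀, hthick⟩ := (isCompact_closedBall c r).exists_thickening_subset_open hΩ hball
  obtain ⟨M, hM, hYM⟩ := exists_forall_integral_norm_sub_rpow_neg_le (α := 3 / 2) (by norm_num)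
    (isCompact_iff_compactSpace.2 ‹_›).isBounded (isBounded_ball (x := c) (r := r))
  let u : C(Y, ℂ) := coord Y - algebraMap ℂ _ c
  have hu : u ∈ rationalAlgebra Y := sub_mem coord_mem_rationalAlgebra (algebraMap_mem _ c)
  have happrox : ∀ δ, 0 < δ → 2 * δ < δ₀ → ∃ v ∈ rationalAlgebra Y,
      dist (truncatedSqDist Y c r) v ≤ π⁻¹ * (‖u‖ * (10000 * √δ * M)) := by
    intro δ hδ hδδ₀
    obtain ⟨P, hPY, hP⟩ := exists_mem_rationalAlgebra_norm_sub_integral_ball_le hY hδ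
      ((thickening_mono hδδ₀.le _).trans hthick) hdense
    refine ⟨((π⁻¹ : ℝ) : ℂ) • (u * P), Subalgebra.smul_mem _ (mul_mem hu hPY) _, ?_⟩
    refine (ContinuousMap.dist_le (by positivity)).2 fun z => ?_
    rw [truncatedSqDist_apply_eq_mul_integral hr, dist_comm, dist_eq_norm,
      ContinuousMap.smul_apply, smul_eq_mul, ContinuousMap.mul_apply,
      show (z - c : ℂ) = u z from rfl, ← mul_sub, ← mul_sub, norm_mul, norm_mul,
      Complex.norm_real, norm_of_nonneg (by positivity)]
    have hPM := (hP z).trans (mul_le_mul_of_nonneg_left (hYM z z.2) (by positivity))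
    have huz := u.norm_coe_le_norm z
    gcongr
  have hlim : Tendsto (fun δ => π⁻¹ * (‖u‖ * (10000 * √δ * M))) (𝓝[>] 0) (𝓝 0) := by
    refine tendsto_nhdsWithin_of_tendsto_nhds (Continuous.tendsto' (by fun_prop) _ _ ?_)
    simp
  refine isClosed_rationalAlgebra.closure_subset (Metric.mem_closure_iff.2 fun ε hε => ?_)
  have hsmall : ∀ᶠ δ in 𝓝[>] (0 : ℝ), δ < δ₀ / 2 :=
    nhdsWithin_le_nhds (eventually_lt_nhds (half_pos hδ₀))
  obtain ⟨δ, hδε, hδδ₀, hδ⟩ :=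
    ((hlim.eventually_lt_const hε).and (hsmall.and eventually_mem_nhdsWithin)).exists
  obtain ⟨v, hv, hdist⟩ := happrox δ hδ (by linarith)
  exact ⟨v, hv, hdist.trans_lt hδε⟩

/-- Lavrentiev's theorem: where `Y` is nowhere dense it imposes no condition on the limits of
rational functions, and a truncated distance to each such point separates it from the others. -/
theorem mem_rationalAlgebra_of_eq_zero_on_closure_interior (hΩ : IsOpen Ω) (hY : OmegaConvex Ω Y)
    {f : C(Y, ℂ)} (hf : ∀ z : Y, (z : ℂ) ∉ Ω ∨ (z : ℂ) ∈ closure (interior Y) → f z = 0) :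
    f ∈ rationalAlgebra Y := by
  have hsep : ∀ x : Y, f x ≠ 0 → ∀ y : Y, (∀ u ∈ rationalAlgebra Y,
      star u ∈ rationalAlgebra Y → u x = u y) → x = y := by
    intro x hx y hxy
    have hxU : (x : ℂ) ∈ Ω \ closure (interior Y) := by
      have := mt (hf x) hx
      tauto
    obtain ⟨r, hr, hrU⟩ := nhds_basis_closedBall.mem_iff.1
      ((hΩ.sdiff isClosed_closure).mem_nhds hxU)
    have hm : truncatedSqDist Y x r ∈ rationalAlgebra Y :=
      truncatedSqDist_mem_rationalAlgebra hΩ hY hr.le (hrU.trans sdiff_subset) fun ζ hζ => by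
        rw [closure_compl]
        exact fun h => (hrU hζ).2 (subset_closure h)
    refine Subtype.ext ((truncatedSqDist_apply_eq_zero_iff hr).1 ?_).symm
    rw [← hxy _ hm (by rwa [star_truncatedSqDist]), truncatedSqDist_apply_eq_zero_iff hr]
  refine mem_of_forall_eq_of_forall_star_mem isClosed_rationalAlgebra fun x y hxy => ?_
  by_cases hx : f x = 0
  · by_cases hy : f y = 0
    · rw [hx, hy]
    · rw [hsep y hy x fun u hu hu' => (hxy u hu hu').symm]
  · rw [hsep x hx y hxy]

end TruncatedSqDist

/-! ### Continuous logarithms and plane separation -/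

section ContinuousLogarithms

/-- Every continuous function from `X` to `ℂ \ {0}` has a continuous logarithm. For a compact plane
set this is Eilenberg's topological characterization of a connected complement. -/
def HasContinuousLogs (X : Type*) [TopologicalSpace X] : Prop :=
  ∀ f : C(X, ℂ), (∀ x, f x ≠ 0) → ∃ g : C(X, ℂ), ∀ x, Complex.exp (g x) = f x

theorem HasContinuousLogs.of_leftInverse {X Y : Type*} [TopologicalSpace X] [TopologicalSpace Y]
    (hY : HasContinuousLogs Y) {i : C(X, Y)} {r : C(Y, X)} (hri : Function.LeftInverse r i) :
    HasContinuousLogs X := by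
  intro f hf
  obtain ⟨g, hg⟩ := hY (f.comp r) fun y => hf (r y)
  exact ⟨g.comp i, fun x => (hg (i x)).trans (congrArg f (hri x))⟩

theorem hasContinuousLogs_of_normedSpace (E : Type*) [NormedAddCommGroup E] [NormedSpace ℝ E] :
    HasContinuousLogs E := by
  intro f hf
  have := (convex_univ (𝕜 := ℝ) (E := E)).contractibleSpace univ_nonempty
  have hE : IsSimplyConnected (univ : Set E) := by
    rw [IsSimplyConnected]
    infer_instance
  obtain ⟨g, hg, hgf⟩ := Complex.exists_continuousOn_eqOn_exp_comp hE isOpen_univ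
    f.continuous.continuousOn (by rintro ⟨x, -, hx⟩; exact hf x hx)
  exact ⟨⟨g, continuousOn_univ.1 hg⟩, fun x => hgf (mem_univ x)⟩

/-- A logarithm of `z - c` would be `θ ↦ θ i + const` along `circleMap c R`, which is not
`2π`-periodic. -/
theorem not_forall_exp_eq_sub_center {c : ℂ} {R : ℝ} (hR : 0 < R) (g : C(sphere c R, ℂ)) :
    ¬ ∀ z, Complex.exp (g z) = z - c := by
  intro hg
  let circle (θ : ℝ) : sphere c R := ⟨circleMap c R θ, circleMap_mem_sphere c hR.le θ⟩
  let k (θ : ℝ) : ℂ := g (circle θ) - θ * Complex.I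
  have hk : Continuous k := by
    have : Continuous circle := (continuous_circleMap c R).subtype_mk _
    fun_prop
  have exp_k (θ : ℝ) : Complex.exp (k θ) = R := by
    rw [Complex.exp_sub, hg, div_eq_iff (Complex.exp_ne_zero _)]
    simp [circle, circleMap]
  have k_eq : k 0 = k (2 * Real.pi) :=
    Complex.isCoveringMap_exp.const_of_comp hk
      (fun s t => Subtype.ext ((exp_k s).trans (exp_k t).symm)) 0 (2 * Real.pi)
  have circle_eq : circle (2 * Real.pi) = circle 0 := Subtype.ext (by simp [circle, circleMap])
  simp [k, circle_eq, eq_comm (a := g _)] at k_eq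

theorem not_hasContinuousLogs_sphere {c : ℂ} {R : ℝ} (hR : 0 < R) :
    ¬ HasContinuousLogs (sphere c R) := by
  intro h
  have center_notMem : c ∉ sphere c R := by simpa using hR.ne
  obtain ⟨g, hg⟩ := h ⟨fun z => z - c, by fun_prop⟩ fun z => coe_sub_ne_zero center_notMem z
  exact not_forall_exp_eq_sub_center hR g hg

end ContinuousLogarithms

section Separation

variable {L X Y Ω : Set ℂ}

theorem exists_continuousMap_restrict_eq_of_disjoint (hL : IsClosed L) (hX : IsClosed X)
    (hLX : Disjoint L X) (f : C(L, ℂ)) (h : C(X, ℂ)) :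
    ∃ F : C(ℂ, ℂ), (∀ z : L, F z = f z) ∧ ∀ z : X, F z = h z := by
  obtain ⟨F₁, rfl⟩ := ContinuousMap.exists_restrict_eq hL f
  obtain ⟨F₂, rfl⟩ := ContinuousMap.exists_restrict_eq hX h
  obtain ⟨χ, hχL, hχX, -⟩ := exists_continuous_zero_one_of_isClosed hL hX hLX
  exact ⟨⟨fun z => F₁ z + χ z * (F₂ z - F₁ z), by fun_prop⟩,
    fun z => by simp [hχL z.2], fun z => by simp [hχX z.2]⟩

theorem frontier_connectedComponentIn_compl_subset {E : Type*} [TopologicalSpace E]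
    [LocallyConnectedSpace E] {Y : Set E} (hY : IsClosed Y) (p : E) :
    frontier (connectedComponentIn Yᶜ p) ⊆ Y := by
  rw [hY.isOpen_compl.connectedComponentIn.frontier_eq]
  rintro x ⟨hx, hxp⟩
  by_contra hxY
  obtain ⟨y, hyx, hyp⟩ := mem_closure_iff.1 hx _ hY.isOpen_compl.connectedComponentIn
    (mem_connectedComponentIn hxY)
  rw [connectedComponentIn_eq hyp, ← connectedComponentIn_eq hyx] at hxp
  exact hxp (mem_connectedComponentIn hxY)

/-- Otherwise `(z - q) exp (g z)` inside the component and `z - p` outside it would be a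
nonvanishing continuous function on the plane. -/
theorem mem_connectedComponentIn_of_exp_eq_div (hY : IsClosed Y) {p q : ℂ} (hp : p ∉ Y)
    (hq : q ∉ Y) (hb : IsBounded (connectedComponentIn Yᶜ p)) {g : C(ℂ, ℂ)}
    (hg : ∀ z ∈ Y, Complex.exp (g z) = (z - p) / (z - q)) :
    q ∈ connectedComponentIn Yᶜ p := by
  classical
  set V := connectedComponentIn Yᶜ p
  have hpV : p ∈ V := mem_connectedComponentIn hp
  by_contra hqV
  let F : ℂ → ℂ := V.piecewise (fun z => Complex.exp (g z) * (z - q)) (fun z => z - p)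
  have hF : Continuous F := by
    refine Continuous.piecewise (fun z hz => ?_) (by fun_prop) (by fun_prop)
    have hzY := frontier_connectedComponentIn_compl_subset hY p hz
    rw [hg z hzY, div_mul_cancel₀ _ (coe_sub_ne_zero hq ⟨z, hzY⟩)]
  have hF0 (z : ℂ) : F z ≠ 0 := by
    by_cases hz : z ∈ V
    · simp only [F, piecewise_eq_of_mem _ _ _ hz]
      exact mul_ne_zero (Complex.exp_ne_zero _) fun h => hqV (sub_eq_zero.1 h ▸ hz)
    · simp only [F, piecewise_eq_of_notMem _ _ _ hz]
      exact fun h => hz (sub_eq_zero.1 h ▸ hpV)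
  obtain ⟨k, hk⟩ := hasContinuousLogs_of_normedSpace ℂ ⟨F, hF⟩ hF0
  obtain ⟨R, hR⟩ := hb.subset_ball p
  have hR0 : 0 < R := pos_of_mem_ball (hR hpV)
  refine not_forall_exp_eq_sub_center hR0 (k.restrict (sphere p R)) fun z => ?_
  have hFz : F z = z - p := piecewise_eq_of_notMem _ _ _ fun hz =>
    (mem_ball.1 (hR hz)).ne (mem_sphere.1 z.2)
  exact (hk z).trans hFz

theorem OmegaConvex.union_of_hasContinuousLogs (hL : OmegaConvex Ω L) (hLc : IsCompact L)
    (hX : IsCompact X) (hXlog : HasContinuousLogs X) (hLX : Disjoint L X) (hLXΩ : L ∪ X ⊆ Ω) :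
    OmegaConvex Ω (L ∪ X) := by
  have := isCompact_iff_compactSpace.1 hLc
  rintro C ⟨⟨p, hp, rfl⟩, hb⟩
  by_contra hC
  have hVΩ : connectedComponentIn (L ∪ X)ᶜ p ⊆ Ω := by
    rwa [← disjoint_compl_right_iff_subset, disjoint_iff_inter_eq_empty,
      ← not_nonempty_iff_eq_empty]
  have hpL : p ∉ L := fun h => hp (.inl h)
  obtain ⟨q, hqW, hq⟩ := not_subset.1 <| hL.not_connectedComponentIn_subset hpL
    (hb.union (hLc.union hX).isBounded) (union_subset hVΩ hLXΩ)
  obtain ⟨hqV, hqLX⟩ := not_or.1 hq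
  have hqX : q ∉ X := fun h => hqLX (.inr h)
  have hpX : p ∉ X := fun h => hp (.inr h)
  obtain ⟨g₁, -, hg₁⟩ := exists_mem_rationalAlgebra_exp_eq isPreconnected_connectedComponentIn
    (connectedComponentIn_subset _ _) (mem_connectedComponentIn hpL) hqW
  obtain ⟨g₂, hg₂⟩ := hXlog
    ⟨fun z => (z - p) / (z - q), by fun_prop (disch := exact coe_sub_ne_zero hqX)⟩
    fun z => div_ne_zero (coe_sub_ne_zero hpX z) (coe_sub_ne_zero hqX z)
  obtain ⟨g, hgL, hgX⟩ :=
    exists_continuousMap_restrict_eq_of_disjoint hLc.isClosed hX.isClosed hLX g₁ g₂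
  refine hqV (mem_connectedComponentIn_of_exp_eq_div (hLc.union hX).isClosed hp hqLX hb (g := g) ?_)
  rintro z (hz | hz)
  · rw [hgL ⟨z, hz⟩, (hg₁ _).1]
  · rw [hgX ⟨z, hz⟩, hg₂, ContinuousMap.coe_mk]

theorem isConnected_setOf_lt_norm {R : ℝ} (hR : 0 ≤ R) : IsConnected {z : ℂ | R < ‖z‖} := by
  have polar : {z : ℂ | R < ‖z‖} =
      (fun p : ℝ × ℝ => circleMap 0 p.1 p.2) '' Ioi R ×ˢ (univ : Set ℝ) := by
    ext z
    refine ⟨fun hz => ⟨(‖z‖, Complex.arg z), ⟨hz, mem_univ _⟩, by simp [circleMap]⟩, ?_⟩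
    rintro ⟨⟨r, θ⟩, ⟨hr, -⟩, rfl⟩
    simpa [abs_of_pos (hR.trans_lt hr)] using hr
  rw [polar]
  refine (isConnected_Ioi.prod isConnected_univ).image _ (Continuous.continuousOn ?_)
  unfold circleMap
  fun_prop

theorem isConnected_compl_iff_hasNoHole (hY : IsCompact Y) : IsConnected Yᶜ ↔ HasNoHole Y := by
  constructor
  · rintro h ⟨_, ⟨q, hq, rfl⟩, hb⟩
    rw [h.isPreconnected.connectedComponentIn hq] at hb
    exact NormedSpace.unbounded_univ ℝ ℂ (union_compl_self Y ▸ hY.isBounded.union hb)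
  · intro h
    obtain ⟨R, hR, hYR⟩ := hY.isBounded.exists_pos_norm_le
    have hE := isConnected_setOf_lt_norm hR.le
    have hEY : {z : ℂ | R < ‖z‖} ⊆ Yᶜ := fun z hz hzY => (hYR z hzY).not_gt hz
    obtain ⟨e, he⟩ := hE.nonempty
    refine ⟨⟨e, hEY he⟩, isPreconnected_of_forall e fun y hy => ?_⟩
    obtain ⟨x, hxy, hx⟩ : ∃ x ∈ connectedComponentIn Yᶜ y, R < ‖x‖ := by
      by_contra! hall
      exact h ⟨_, ⟨y, hy, rfl⟩, isBounded_iff_forall_norm_le.2 ⟨R, hall⟩⟩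
    exact ⟨_, union_subset (connectedComponentIn_subset Yᶜ y) hEY, .inr he,
      .inl (mem_connectedComponentIn hy),
      isPreconnected_connectedComponentIn.union x hxy hx hE.isPreconnected⟩

theorem omegaConvex_univ_iff_hasNoHole : OmegaConvex univ Y ↔ HasNoHole Y := by
  simp [OmegaConvex, HasNoHole]

theorem hasNoHole_union_of_hasContinuousLogs (hL : HasNoHole L) (hLc : IsCompact L)
    (hX : IsCompact X) (hXlog : HasContinuousLogs X) (hLX : Disjoint L X) : HasNoHole (L ∪ X) :=
  omegaConvex_univ_iff_hasNoHole.1 <|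
    (omegaConvex_univ_iff_hasNoHole.2 hL).union_of_hasContinuousLogs hLc hX hXlog hLX
      (subset_univ _)

theorem hasNoHole_empty : HasNoHole (∅ : Set ℂ) := by
  rw [← isConnected_compl_iff_hasNoHole isCompact_empty, compl_empty]
  exact isConnected_univ

theorem hasNoHole_of_hasContinuousLogs (hY : IsCompact Y) (hlog : HasContinuousLogs Y) :
    HasNoHole Y :=
  empty_union Y ▸ hasNoHole_union_of_hasContinuousLogs hasNoHole_empty isCompact_empty hY hlog
    (empty_disjoint Y)

end Separation

/-! ### Lavrentiev sets -/

/-- The compact plane sets `K` on which every continuous function is a uniform limit of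
polynomials, in the form given to this condition by Lavrentiev's theorem. -/
structure IsLavrentiev (K : Set ℂ) : Prop where
  isCompact : IsCompact K
  interior_eq_empty : interior K = ∅
  hasNoHole : HasNoHole K

namespace IsLavrentiev

variable {J K : Set ℂ}

theorem isConnected_compl (hK : IsLavrentiev K) : IsConnected Kᶜ :=
  (isConnected_compl_iff_hasNoHole hK.isCompact).2 hK.hasNoHole

theorem mono (hK : IsLavrentiev K) (hJ : IsClosed J) (hJK : J ⊆ K) : IsLavrentiev J where
  isCompact := hK.isCompact.of_isClosed_subset hJ hJK
  interior_eq_empty := subset_eq_empty (interior_mono hJK) hK.interior_eq_empty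
  hasNoHole := by
    rw [← isConnected_compl_iff_hasNoHole (hK.isCompact.of_isClosed_subset hJ hJK)]
    have hdense := interior_eq_empty_iff_dense_compl.1 hK.interior_eq_empty
    exact hK.isConnected_compl.subset_closure (compl_subset_compl.2 hJK)
      (hdense.closure_eq ▸ subset_univ _)

theorem exists_polynomial_norm_eval_sub_lt (hK : IsLavrentiev K) (f : C(K, ℂ)) {ε : ℝ}
    (hε : 0 < ε) : ∃ P : Polynomial ℂ, ∀ z : K, ‖P.eval (z : ℂ) - f z‖ < ε := by
  have := isCompact_iff_compactSpace.1 hK.isCompact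
  have hcoord : coord K = Polynomial.X.toContinuousMapOn K := by ext; simp
  have hle : rationalAlgebra K ≤ (polynomialFunctions K).topologicalClosure := by
    refine rationalAlgebra_le (Subalgebra.isClosed_topologicalClosure _) ?_
      fun C hC => (hK.hasNoHole ⟨C, hC⟩).elim
    exact hcoord ▸ Subalgebra.le_topologicalClosure _ ⟨Polynomial.X, mem_univ _, rfl⟩
  have hf : f ∈ rationalAlgebra K :=
    mem_rationalAlgebra_of_eq_zero_on_closure_interior isOpen_univ
      (fun C hC => (hK.hasNoHole ⟨C, hC⟩).elim) (fun z hz => by simp [hK.interior_eq_empty] at hz)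
  obtain ⟨_, ⟨P, -, rfl⟩, hP⟩ := Metric.mem_closure_iff.1 (hle hf) ε hε
  refine ⟨P, fun z => ?_⟩
  rw [dist_comm, dist_eq_norm] at hP
  exact (ContinuousMap.norm_coe_le_norm _ z).trans_lt hP

theorem exists_exp_eq_sub_const (hK : IsLavrentiev K) {a : ℂ} (ha : a ∉ K) :
    ∃ g : C(K, ℂ), ∀ z, Complex.exp (g z) = z - a := by
  have := isCompact_iff_compactSpace.1 hK.isCompact
  obtain ⟨R, hR, hKR⟩ := hK.isCompact.isBounded.exists_pos_norm_lt
  have hRK : (R : ℂ) ∉ K := fun h => (hKR R h).ne (by simp [abs_of_pos hR])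
  obtain ⟨α, -, hα⟩ := exists_mem_rationalAlgebra_exp_eq hK.isConnected_compl.isPreconnected
    subset_rfl ha hRK
  have slit (z : K) : (R : ℂ) - z ∈ Complex.slitPlane :=
    .inl (by simpa using (Complex.re_le_norm z).trans_lt (hKR z z.2))
  let β : C(K, ℂ) := ⟨fun z => Complex.log (R - z), .clog (by fun_prop) slit⟩
  refine ⟨α + β + .const _ (Real.pi * Complex.I), fun z => ?_⟩
  have := coe_sub_ne_zero hRK z
  simp only [ContinuousMap.add_apply, ContinuousMap.const_apply, Complex.exp_add, (hα z).1,
    Complex.exp_pi_mul_I, β, ContinuousMap.coe_mk,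
    Complex.exp_log (Complex.slitPlane_ne_zero (slit z))]
  field_simp
  ring

theorem exists_exp_eq_eval (hK : IsLavrentiev K) {P : Polynomial ℂ} (hP : P ≠ 0)
    (hPK : ∀ z : K, P.eval (z : ℂ) ≠ 0) :
    ∃ g : C(K, ℂ), ∀ z : K, Complex.exp (g z) = P.eval (z : ℂ) := by
  have exists_exp_eq_prod (m : Multiset ℂ) (hm : ∀ a ∈ m, a ∉ K) :
      ∃ g : C(K, ℂ), ∀ z : K, Complex.exp (g z) = (m.map fun a => (z : ℂ) - a).prod := by
    induction m using Multiset.induction_on with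
    | empty => exact ⟨0, fun z => by simp⟩
    | cons a m ih =>
      obtain ⟨g, hg⟩ := ih fun b hb => hm b (Multiset.mem_cons_of_mem hb)
      obtain ⟨k, hk⟩ := hK.exists_exp_eq_sub_const (hm a (Multiset.mem_cons_self a m))
      exact ⟨k + g, fun z => by simp [Complex.exp_add, hg, hk]⟩
  obtain ⟨g, hg⟩ := exists_exp_eq_prod P.roots fun a ha haK =>
    hPK ⟨a, haK⟩ (Polynomial.isRoot_of_mem_roots ha)
  refine ⟨.const _ (Complex.log P.leadingCoeff) + g, fun z => ?_⟩
  rw [ContinuousMap.add_apply, Complex.exp_add, hg, ContinuousMap.const_apply,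
    Complex.exp_log (Polynomial.leadingCoeff_ne_zero.2 hP)]
  conv_rhs => rw [(IsAlgClosed.splits P).eq_prod_roots]
  simp [Polynomial.eval_multiset_prod]

theorem hasContinuousLogs (hK : IsLavrentiev K) : HasContinuousLogs K := by
  intro f hf
  have := isCompact_iff_compactSpace.1 hK.isCompact
  obtain ⟨ε, hε, hfε⟩ := isCompact_univ.exists_forall_le' (f := fun z => ‖f z‖) (by fun_prop)
    fun z _ => norm_pos_iff.2 (hf z)
  obtain ⟨P, hPf⟩ := hK.exists_polynomial_norm_eval_sub_lt f hε
  have slit (z : K) : P.eval (z : ℂ) / f z ∈ Complex.slitPlane := by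
    rw [← add_sub_cancel (1 : ℂ) (P.eval (z : ℂ) / f z)]
    apply Complex.mem_slitPlane_of_norm_lt_one
    rw [div_sub_one (hf z), norm_div, div_lt_one (norm_pos_iff.2 (hf z))]
    exact (hPf z).trans_le (hfε z (mem_univ z))
  have hPK (z : K) : P.eval (z : ℂ) ≠ 0 :=
    (div_ne_zero_iff.1 (Complex.slitPlane_ne_zero (slit z))).1
  rcases K.eq_empty_or_nonempty with rfl | ⟨z₀, hz₀⟩
  · exact ⟨f, fun z => z.2.elim⟩
  obtain ⟨g, hg⟩ := hK.exists_exp_eq_eval (fun h => hPK ⟨z₀, hz₀⟩ (by simp [h])) hPK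
  let k : C(K, ℂ) := ⟨fun z => Complex.log (P.eval (z : ℂ) / f z),
    .clog (by fun_prop (disch := exact hf)) slit⟩
  have hk (z : K) : Complex.exp (k z) = P.eval (z : ℂ) / f z :=
    Complex.exp_log (Complex.slitPlane_ne_zero (slit z))
  exact ⟨g - k, fun z => by
    rw [ContinuousMap.sub_apply, Complex.exp_sub, hg, hk, div_div_cancel₀ (hPK z)]⟩

end IsLavrentiev

section InjectiveImages

theorem exists_homeomorph_image {X Y : Type*} [TopologicalSpace X] [TopologicalSpace Y] [T2Space Y]
    {K : Set X} (hK : IsCompact K) {φ : X → Y} (hφ : ContinuousOn φ K) (hinj : InjOn φ K) :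
    ∃ e : K ≃ₜ φ '' K, ∀ z : K, (e z : Y) = φ z := by
  have := isCompact_iff_compactSpace.1 hK
  exact ⟨Continuous.homeoOfEquivCompactToT2 (f := Equiv.Set.imageOfInjOn φ K hinj)
    (hφ.domRestrict.subtype_mk _), fun _ => rfl⟩

theorem hasContinuousLogs_image_iff {X Y : Type*} [TopologicalSpace X] [TopologicalSpace Y]
    [T2Space Y] {K : Set X} (hK : IsCompact K) {φ : X → Y} (hφ : ContinuousOn φ K)
    (hinj : InjOn φ K) : HasContinuousLogs (φ '' K) ↔ HasContinuousLogs K := by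
  obtain ⟨e, -⟩ := exists_homeomorph_image hK hφ hinj
  exact ⟨fun h => h.of_leftInverse (i := e) (r := e.symm) e.left_inv,
    fun h => h.of_leftInverse (i := e.symm) (r := e) e.right_inv⟩

/-- A nonempty interior of the image would contain a circle, and circles do not have continuous
logarithms. -/
theorem IsLavrentiev.image {K : Set ℂ} (hK : IsLavrentiev K) {φ : ℂ → ℂ} (hφ : ContinuousOn φ K)
    (hinj : InjOn φ K) : IsLavrentiev (φ '' K) where
  isCompact := hK.isCompact.image_of_continuousOn hφ
  interior_eq_empty := by
    by_contra hne
    obtain ⟨c, hc⟩ := nonempty_iff_ne_empty.2 hne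
    obtain ⟨R, hR, hball⟩ := Metric.nhds_basis_closedBall.mem_iff.1 (mem_interior_iff_mem_nhds.1 hc)
    have hJ : IsLavrentiev (K ∩ φ ⁻¹' sphere c R) :=
      hK.mono (hφ.preimage_isClosed_of_isClosed hK.isCompact.isClosed isClosed_sphere)
        inter_subset_left
    apply not_hasContinuousLogs_sphere (c := c) hR
    rw [← inter_eq_right.2 (sphere_subset_closedBall.trans hball), ← image_inter_preimage]
    exact (hasContinuousLogs_image_iff hJ.isCompact (hφ.mono inter_subset_left)
      (hinj.mono inter_subset_left)).2 hJ.hasContinuousLogs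
  hasNoHole := hasNoHole_of_hasContinuousLogs (hK.isCompact.image_of_continuousOn hφ)
    ((hasContinuousLogs_image_iff hK.isCompact hφ hinj).2 hK.hasContinuousLogs)

theorem isLavrentiev_ofReal_image_Icc {a b : ℝ} (hab : a ≤ b) :
    IsLavrentiev (Complex.ofReal '' Icc a b) where
  isCompact := isCompact_Icc.image Complex.continuous_ofReal
  interior_eq_empty := by
    have : Complex.ofReal '' Icc a b ⊆ Complex.im ⁻¹' {0} := by rintro _ ⟨x, -, rfl⟩; simp
    refine subset_eq_empty (interior_mono this) ?_
    rw [Complex.interior_preimage_im, interior_singleton, preimage_empty]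
  hasNoHole := by
    refine hasNoHole_of_hasContinuousLogs (isCompact_Icc.image Complex.continuous_ofReal)
      ((hasContinuousLogs_image_iff isCompact_Icc Complex.continuous_ofReal.continuousOn
        Complex.ofReal_injective.injOn).2 ?_)
    exact (hasContinuousLogs_of_normedSpace ℝ).of_leftInverse (i := ⟨Subtype.val, by fun_prop⟩)
      (r := ⟨projIcc a b hab, continuous_projIcc⟩) (projIcc_val hab)

theorem isLavrentiev_image_Icc {a b : ℝ} (hab : a ≤ b) {γ : ℝ → ℂ} (hγ : ContinuousOn γ (Icc a b))
    (hinj : InjOn γ (Icc a b)) : IsLavrentiev (γ '' Icc a b) := by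
  have hre : MapsTo Complex.re (Complex.ofReal '' Icc a b) (Icc a b) := by
    rintro _ ⟨x, hx, rfl⟩
    simpa using hx
  have hreinj : InjOn Complex.re (Complex.ofReal '' Icc a b) := by
    rintro _ ⟨x, -, rfl⟩ _ ⟨y, -, rfl⟩ h
    simpa using h
  have := (isLavrentiev_ofReal_image_Icc hab).image
    (hγ.comp Complex.continuous_re.continuousOn hre) (hinj.comp hreinj hre)
  simpa only [image_image, Function.comp_apply, Complex.ofReal_re] using! this

end InjectiveImages

/-! ### Jordan arcs and Jordan curves -/

section JordanArcsAndCurves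

variable {E J : Set ℂ}

theorem IsJordanArc.isLavrentiev (hE : IsJordanArc E) : IsLavrentiev E := by
  obtain ⟨γ, hγ, hinj, rfl⟩ := hE
  exact isLavrentiev_image_Icc zero_le_one hγ hinj

theorem injOn_circleMap_Icc {a b R : ℝ} {c : ℂ} (hR : R ≠ 0) (hab : b - a < 2 * Real.pi) :
    InjOn (circleMap c R) (Icc a b) :=
  (injOn_circleMap_of_abs_sub_le' hR (b := a + 2 * Real.pi) (by linarith)).mono
    (Icc_subset_Ico_right (by linarith))

theorem isLavrentiev_image_circleMap_Icc {γ : ℂ → ℂ} {c : ℂ} {R : ℝ} (hR : 0 < R)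
    (hγ : ContinuousOn γ (sphere c R)) (hinj : InjOn γ (sphere c R)) {a b : ℝ} (hab : a ≤ b)
    (hab' : b - a < 2 * Real.pi) : IsLavrentiev (γ '' (circleMap c R '' Icc a b)) := by
  have hmaps : MapsTo (circleMap c R) (Icc a b) (sphere c R) :=
    fun θ _ => circleMap_mem_sphere c hR.le θ
  rw [← image_comp]
  exact isLavrentiev_image_Icc hab (hγ.comp (continuous_circleMap c R).continuousOn hmaps)
    (hinj.comp (injOn_circleMap_Icc hR.ne' hab') hmaps)

theorem IsJordanCurve.isCompact (hE : IsJordanCurve E) : IsCompact E := by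
  obtain ⟨γ, hγ, -, rfl⟩ := hE
  exact (isCompact_sphere 0 1).image_of_continuousOn hγ

theorem IsJordanArc.nonempty (hE : IsJordanArc E) : E.Nonempty := by
  obtain ⟨γ, -, -, rfl⟩ := hE
  exact (nonempty_Icc.2 zero_le_one).image γ

theorem IsJordanCurve.nonempty (hE : IsJordanCurve E) : E.Nonempty := by
  obtain ⟨γ, -, -, rfl⟩ := hE
  exact (NormedSpace.sphere_nonempty.2 zero_le_one).image γ

theorem IsJordanCurve.interior_eq_empty (hE : IsJordanCurve E) : interior E = ∅ := by
  obtain ⟨γ, hγ, hinj, rfl⟩ := hE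
  have halves : sphere (0 : ℂ) 1 =
      circleMap 0 1 '' Icc 0 Real.pi ∪ circleMap 0 1 '' Icc Real.pi (2 * Real.pi) := by
    have hrange := (periodic_circleMap 0 1).image_Icc Real.two_pi_pos 0
    rw [zero_add, range_circleMap, abs_one] at hrange
    rw [← image_union, Icc_union_Icc_eq_Icc Real.pi_pos.le (by linarith [Real.pi_pos]), hrange]
  have h₁ := isLavrentiev_image_circleMap_Icc one_pos hγ hinj Real.pi_pos.le
    (by linarith [Real.pi_pos])
  have h₂ := isLavrentiev_image_circleMap_Icc one_pos hγ hinj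
    (show Real.pi ≤ 2 * Real.pi by linarith [Real.pi_pos]) (by linarith [Real.pi_pos])
  rw [halves, image_union,
    interior_union_isClosed_of_interior_empty h₁.isCompact.isClosed h₂.interior_eq_empty,
    h₁.interior_eq_empty]

theorem IsJordanCurve.not_isLavrentiev (hE : IsJordanCurve E) : ¬ IsLavrentiev E := by
  obtain ⟨γ, hγ, hinj, rfl⟩ := hE
  exact fun h => not_hasContinuousLogs_sphere one_pos <|
    (hasContinuousLogs_image_iff (isCompact_sphere 0 1) hγ hinj).1 h.hasContinuousLogs

theorem exists_rat_subset_image_circleMap_Icc {c : ℂ} {R : ℝ} (hR : 0 ≤ R) (hJ : IsClosed J)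
    (hsub : J ⊂ sphere c R) : ∃ a b : ℚ, (a : ℝ) ≤ b ∧ (b : ℝ) - a < 2 * Real.pi ∧
      J ⊆ circleMap c R '' Icc (a : ℝ) b := by
  have sphere_eq : sphere c R = range (circleMap c R) := by rw [range_circleMap, abs_of_nonneg hR]
  obtain ⟨hJR, u, hu, huJ⟩ := ssubset_iff_exists.1 hsub
  obtain ⟨θ₀, rfl⟩ := sphere_eq ▸ hu
  obtain ⟨δ, hδ, hball⟩ := Metric.isOpen_iff.1
    (hJ.isOpen_compl.preimage (continuous_circleMap c R)) θ₀ huJ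
  have far_of_mem {θ : ℝ} (hθ : circleMap c R θ ∈ J) : δ ≤ |θ - θ₀| := by
    by_contra! h
    exact hball h hθ
  obtain ⟨a, hθ₀a, haθ₀⟩ := exists_rat_btwn (lt_add_of_pos_right θ₀ (lt_min hδ one_pos))
  obtain ⟨b, hθ₀b, hbθ₀⟩ := exists_rat_btwn (sub_lt_self (θ₀ + 2 * Real.pi) (lt_min hδ one_pos))
  have hmin := min_le_right δ 1
  have hminδ := min_le_left δ 1
  refine ⟨a, b, by linarith [Real.pi_gt_three], by linarith, fun z hz => ?_⟩
  obtain ⟨t, rfl⟩ := sphere_eq ▸ hJR hz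
  obtain ⟨θ, ⟨hθ₀, hθ⟩, hθt⟩ := (periodic_circleMap c R).exists_mem_Ico Real.two_pi_pos t θ₀
  rw [hθt] at hz ⊢
  have hfar := far_of_mem hz
  have hfar' := far_of_mem ((periodic_circleMap c R).sub_eq θ ▸ hz)
  rw [abs_of_nonneg (by linarith)] at hfar
  rw [abs_of_neg (by linarith)] at hfar'
  exact mem_image_of_mem _ ⟨by linarith, by linarith⟩

theorem IsJordanCurve.exists_countable_isLavrentiev (hE : IsJordanCurve E) :
    ∃ 𝒬 : Set (Set ℂ), 𝒬.Countable ∧ (∀ P ∈ 𝒬, IsLavrentiev P ∧ P ⊆ E) ∧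
      ∀ J ⊆ E, IsLavrentiev J → ∃ P ∈ 𝒬, J ⊆ P := by
  obtain ⟨γ, hγ, hinj, rfl⟩ := id hE
  let subarc (q : ℚ × ℚ) : Set ℂ := γ '' (circleMap 0 1 '' Icc (q.1 : ℝ) q.2)
  refine ⟨subarc '' {q | (q.1 : ℝ) ≤ q.2 ∧ (q.2 : ℝ) - q.1 < 2 * Real.pi},
    (to_countable _).image _, ?_, fun J hJE hJ => ?_⟩
  · rintro _ ⟨q, ⟨hab, hab'⟩, rfl⟩
    exact ⟨isLavrentiev_image_circleMap_Icc one_pos hγ hinj hab hab',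
      image_mono (image_subset_iff.2 fun θ _ => circleMap_mem_sphere 0 zero_le_one θ)⟩
  · have hpre : sphere 0 1 ∩ γ ⁻¹' J ⊂ sphere 0 1 := by
      refine inter_subset_left.ssubset_of_ne fun h => hE.not_isLavrentiev ?_
      rwa [← h, image_inter_preimage, inter_eq_right.2 hJE]
    obtain ⟨a, b, hab, hab', hsub⟩ := exists_rat_subset_image_circleMap_Icc zero_le_one
      (hγ.preimage_isClosed_of_isClosed isClosed_sphere hJ.isCompact.isClosed) hpre
    refine ⟨subarc (a, b), ⟨(a, b), ⟨hab, hab'⟩, rfl⟩, ?_⟩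
    calc J = γ '' (sphere 0 1 ∩ γ ⁻¹' J) := by rw [image_inter_preimage, inter_eq_right.2 hJE]
      _ ⊆ subarc (a, b) := image_mono hsub

theorem isClosed_of_isJordanArc_or_isJordanCurve (hE : IsJordanArc E ∨ IsJordanCurve E) :
    IsClosed E :=
  hE.elim (fun h => h.isLavrentiev.isCompact.isClosed) fun h => h.isCompact.isClosed

theorem interior_eq_empty_of_isJordanArc_or_isJordanCurve (hE : IsJordanArc E ∨ IsJordanCurve E) :
    interior E = ∅ :=
  hE.elim (fun h => h.isLavrentiev.interior_eq_empty) IsJordanCurve.interior_eq_empty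

theorem exists_countable_isLavrentiev (hE : IsJordanArc E ∨ IsJordanCurve E) :
    ∃ 𝒬 : Set (Set ℂ), 𝒬.Countable ∧ (∀ P ∈ 𝒬, IsLavrentiev P ∧ P ⊆ E) ∧
      ∀ J ⊆ E, IsLavrentiev J → ∃ P ∈ 𝒬, J ⊆ P := by
  rcases hE with hE | hE
  · exact ⟨{E}, countable_singleton E, by simpa using hE.isLavrentiev, fun J hJ _ => ⟨E, rfl, hJ⟩⟩
  · exact hE.exists_countable_isLavrentiev

end JordanArcsAndCurves

section LocallyFiniteUnions

variable {ι : Type*}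

theorem isLavrentiev_empty : IsLavrentiev ∅ := ⟨isCompact_empty, interior_empty, hasNoHole_empty⟩

theorem IsLavrentiev.union {J K : Set ℂ} (hJ : IsLavrentiev J) (hK : IsLavrentiev K)
    (hJK : Disjoint J K) : IsLavrentiev (J ∪ K) where
  isCompact := hJ.isCompact.union hK.isCompact
  interior_eq_empty := by
    rw [interior_union_isClosed_of_interior_empty hJ.isCompact.isClosed hK.interior_eq_empty,
      hJ.interior_eq_empty]
  hasNoHole := hasNoHole_union_of_hasContinuousLogs hJ.hasNoHole hJ.isCompact hK.isCompact
    hK.hasContinuousLogs hJK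

theorem isLavrentiev_biUnion {s : Set ι} (hs : s.Finite) {P : ι → Set ℂ}
    (hP : ∀ k ∈ s, IsLavrentiev (P k)) (hd : s.PairwiseDisjoint P) :
    IsLavrentiev (⋃ k ∈ s, P k) := by
  induction s, hs using Set.Finite.induction_on with
  | empty => simpa using isLavrentiev_empty
  | @insert k s hk _ ih =>
    rw [biUnion_insert]
    refine (hP k (mem_insert k s)).union (ih (fun j hj => hP j (mem_insert_of_mem k hj))
      (hd.subset (subset_insert k s))) (disjoint_iUnion₂_right.2 fun j hj => ?_)
    exact hd (mem_insert k s) (mem_insert_of_mem k hj) (ne_of_mem_of_not_mem hj hk).symm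

theorem interior_iUnion_eq_empty {X : Type*} [TopologicalSpace X] [BaireSpace X] [Countable ι]
    {g : ι → Set X} (hg : ∀ k, IsClosed (g k)) (hint : ∀ k, interior (g k) = ∅) :
    interior (⋃ k, g k) = ∅ :=
  interior_eq_empty_iff_dense_compl.2 <| dense_of_mem_residual <| isMeagre_iUnion fun k =>
    ((hg k).isNowhereDense_iff.2 (hint k)).isMeagre

variable {g : ι → Set ℂ}

theorem countable_of_locallyFinite (hg : ∀ k, IsJordanArc (g k) ∨ IsJordanCurve (g k))
    (hfin : LocallyFinite g) : Countable ι :=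
  countable_univ_iff.1 <| hfin.countable_univ fun k => (hg k).elim IsJordanArc.nonempty
    IsJordanCurve.nonempty

theorem isLavrentiev_of_subset_iUnion (hg : ∀ k, IsJordanArc (g k) ∨ IsJordanCurve (g k))
    (hfin : LocallyFinite g) {K : Set ℂ} (hKg : K ⊆ ⋃ k, g k) (hK : IsCompact K)
    (hKc : IsConnected Kᶜ) : IsLavrentiev K where
  isCompact := hK
  interior_eq_empty := by
    have := countable_of_locallyFinite hg hfin
    have hint := interior_iUnion_eq_empty
      (fun k => isClosed_of_isJordanArc_or_isJordanCurve (hg k))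
      fun k => interior_eq_empty_of_isJordanArc_or_isJordanCurve (hg k)
    exact subset_empty_iff.1 ((interior_mono hKg).trans hint.subset)
  hasNoHole := (isConnected_compl_iff_hasNoHole hK).1 hKc

theorem exists_countable_isLavrentiev_iUnion (hg : ∀ k, IsJordanArc (g k) ∨ IsJordanCurve (g k))
    (hfin : LocallyFinite g) (hdisj : Pairwise (Function.onFun Disjoint g)) :
    ∃ 𝓕 : Set (Set ℂ), 𝓕.Countable ∧ (∀ S ∈ 𝓕, IsLavrentiev S ∧ S ⊆ ⋃ k, g k) ∧
      ∀ K ⊆ ⋃ k, g k, IsCompact K → IsConnected Kᶜ → ∃ S ∈ 𝓕, K ⊆ S := by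
  have := countable_of_locallyFinite hg hfin
  choose 𝒬 h𝒬 hsub hcof using fun k => exists_countable_isLavrentiev (hg k)
  let finiteUnions : Set (Set ℂ) := sUnion '' {T | T.Finite ∧ T ⊆ ⋃ k, 𝒬 k}
  refine ⟨{S ∈ finiteUnions | IsLavrentiev S}, ?_, ?_, fun K hKg hK hKc => ?_⟩
  · exact ((countable_ofPred_finite_subset (countable_iUnion h𝒬)).image _).mono (sep_subset _ _)
  · rintro _ ⟨⟨T, ⟨-, hT⟩, rfl⟩, hS⟩
    refine ⟨hS, sUnion_subset fun P hP => ?_⟩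
    obtain ⟨k, hk⟩ := mem_iUnion.1 (hT hP)
    exact (hsub k P hk).2.trans (subset_iUnion g k)
  · have hKL := isLavrentiev_of_subset_iUnion hg hfin hKg hK hKc
    have hgc (k : ι) : IsClosed (g k) := isClosed_of_isJordanArc_or_isJordanCurve (hg k)
    choose P hP𝒬 hKP using fun k => hcof k (K ∩ g k) inter_subset_right
      (hKL.mono (hK.isClosed.inter (hgc k)) inter_subset_left)
    let s : Set ι := {k | (g k ∩ K).Nonempty}
    have hs : s.Finite := hfin.finite_nonempty_inter_compact hK
    refine ⟨⋃ k ∈ s, P k, ⟨⟨P '' s, ⟨hs.image P, ?_⟩, sUnion_image P s⟩, ?_⟩, fun z hz => ?_⟩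
    · exact image_subset_iff.2 fun k _ => mem_iUnion_of_mem k (hP𝒬 k)
    · exact isLavrentiev_biUnion hs (fun k _ => (hsub k _ (hP𝒬 k)).1) fun j _ k _ hjk =>
        (hdisj hjk).mono (hsub j _ (hP𝒬 j)).2 (hsub k _ (hP𝒬 k)).2
    · obtain ⟨k, hk⟩ := mem_iUnion.1 (hKg hz)
      exact mem_biUnion (show k ∈ s from ⟨z, hk, hz⟩) (hKP k ⟨hz, hk⟩)

end LocallyFiniteUnions

/-! ### Approximation on Lavrentiev sets -/

section Approximation

variable {Ω L X : Set ℂ}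

/-- The algebra of restrictions to `Y` of holomorphic functions on `Ω`. For `Y = Ω` it is the space
usually written `H(Ω)`, with the topology of locally uniform convergence. -/
def holomorphicAlgebra (Ω Y : Set ℂ) : Subalgebra ℂ C(Y, ℂ) where
  carrier := {u | ∃ F : ℂ → ℂ, DifferentiableOn ℂ F Ω ∧ ∀ z : Y, u z = F z}
  mul_mem' := by
    rintro u v ⟨F, hF, hFu⟩ ⟨H, hH, hHv⟩
    exact ⟨fun z => F z * H z, hF.mul hH, fun z => by simp [hFu, hHv]⟩
  add_mem' := by
    rintro u v ⟨F, hF, hFu⟩ ⟨H, hH, hHv⟩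
    exact ⟨fun z => F z + H z, hF.add hH, fun z => by simp [hFu, hHv]⟩
  algebraMap_mem' c := ⟨fun _ => c, differentiableOn_const c, fun _ => rfl⟩

theorem rationalAlgebra_le_topologicalClosure_holomorphicAlgebra {Y : Set ℂ} [CompactSpace Y]
    (hY : OmegaConvex Ω Y) (hYΩ : Y ⊆ Ω) :
    rationalAlgebra Y ≤ (holomorphicAlgebra Ω Y).topologicalClosure := by
  have hle := (holomorphicAlgebra Ω Y).le_topologicalClosure
  refine rationalAlgebra_le (holomorphicAlgebra Ω Y).isClosed_topologicalClosure
    (hle ⟨id, differentiableOn_id, fun _ => rfl⟩) fun C hC => ?_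
  obtain ⟨q, hqC, hqΩ⟩ := hY C hC
  refine ⟨q, hqC, fun hqY => hqΩ (hYΩ hqY), hle ⟨fun z => (z - q)⁻¹, ?_, fun _ => rfl⟩⟩
  exact (differentiableOn_id.sub_const q).inv fun z hz h => hqΩ (sub_eq_zero.1 h ▸ hz)

theorem exists_differentiableOn_norm_sub_lt (hΩ : IsOpen Ω) (hL : IsCompact L)
    (hLc : OmegaConvex Ω L) (hLΩ : L ⊆ Ω) (hX : IsLavrentiev X) (hXΩ : X ⊆ Ω)
    (hLX : Disjoint L X) {f : ℂ → ℂ} (hf : DifferentiableOn ℂ f Ω) (h : C(X, ℂ)) {ε : ℝ}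
    (hε : 0 < ε) :
    ∃ F, DifferentiableOn ℂ F Ω ∧ (∀ z ∈ L, ‖F z - f z‖ < ε) ∧ ∀ z : X, ‖F z - h z‖ < ε := by
  have hYΩ : L ∪ X ⊆ Ω := union_subset hLΩ hXΩ
  have hYc : OmegaConvex Ω (L ∪ X) :=
    hLc.union_of_hasContinuousLogs hL hX.isCompact hX.hasContinuousLogs hLX hYΩ
  have : CompactSpace ↥(L ∪ X) := isCompact_iff_compactSpace.1 (hL.union hX.isCompact)
  obtain ⟨u, huL, huX⟩ := exists_continuousMap_restrict_eq_of_disjoint hL.isClosed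
    hX.isCompact.isClosed hLX 0 (h - ⟨X.domRestrict f, (hf.continuousOn.mono hXΩ).domRestrict⟩)
  have hint : interior (L ∪ X) = interior L :=
    interior_union_isClosed_of_interior_empty hL.isClosed hX.interior_eq_empty
  have hu : u.restrict (L ∪ X) ∈ rationalAlgebra (L ∪ X) := by
    refine mem_rationalAlgebra_of_eq_zero_on_closure_interior hΩ hYc fun z hz => ?_
    rcases hz with hz | hz
    · exact absurd (hYΩ z.2) hz
    · rw [hint] at hz
      exact huL ⟨z, closure_minimal interior_subset hL.isClosed hz⟩
  obtain ⟨_, ⟨F, hF, hFv⟩, hv⟩ := Metric.mem_closure_iff.1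
    (rationalAlgebra_le_topologicalClosure_holomorphicAlgebra hYc hYΩ hu) ε hε
  have hFu (z : ℂ) (hz : z ∈ L ∪ X) : ‖F z - u z‖ < ε := by
    have := (ContinuousMap.dist_apply_le_dist ⟨z, hz⟩).trans_lt hv
    rwa [hFv, dist_comm, dist_eq_norm] at this
  refine ⟨fun z => F z + f z, hF.add hf, fun z hz => ?_, fun z => ?_⟩
  · simpa [huL ⟨z, hz⟩] using hFu z (.inl hz)
  · have := hFu z (.inr z.2)
    rwa [huX z, ContinuousMap.sub_apply, sub_sub_eq_add_sub] at this

theorem exists_differentiableOn_norm_comp_sub_lt (hΩ : IsOpen Ω) (hL : IsCompact L)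
    (hLc : OmegaConvex Ω L) (hLΩ : L ⊆ Ω) (hX : IsLavrentiev X) {φ : ℂ → ℂ}
    (hφ : ContinuousOn φ X) (hinj : InjOn φ X) (hφΩ : MapsTo φ X Ω) (hLX : Disjoint (φ '' X) L)
    {f : ℂ → ℂ} (hf : DifferentiableOn ℂ f Ω) (h : C(X, ℂ)) {ε : ℝ} (hε : 0 < ε) :
    ∃ F, DifferentiableOn ℂ F Ω ∧ (∀ z ∈ L, ‖F z - f z‖ < ε) ∧ ∀ z : X, ‖F (φ z) - h z‖ < ε := by
  obtain ⟨e, he⟩ := exists_homeomorph_image hX.isCompact hφ hinj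
  obtain ⟨F, hF, hFL, hFX⟩ := exists_differentiableOn_norm_sub_lt hΩ hL hLc hLΩ
    (hX.image hφ hinj) hφΩ.image_subset hLX.symm hf (h.comp ⟨e.symm, e.symm.continuous⟩) hε
  refine ⟨F, hF, hFL, fun z => ?_⟩
  simpa [he] using hFX (e z)

theorem omegaConvex_closedBall_diff_thickening {R δ : ℝ} (hR : 0 ≤ R) :
    OmegaConvex Ω (closedBall 0 R \ thickening δ Ωᶜ) := by
  rintro _ ⟨⟨q, hq, rfl⟩, hb⟩
  rw [compl_sdiff] at hq hb ⊢
  rcases hq with hq | hq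
  · obtain ⟨w, hw, hqw⟩ := mem_thickening_iff.1 hq
    refine ⟨w, ?_, hw⟩
    refine (convex_ball w δ).isPreconnected.subset_connectedComponentIn hqw
      (fun z hz => .inl <| mem_thickening_iff.2 ⟨w, hw, hz⟩) ?_
    exact mem_ball_self (dist_nonneg.trans_lt hqw)
  · have hout : {z : ℂ | R < ‖z‖} = (closedBall 0 R)ᶜ := by ext; simp
    have hsub : (closedBall 0 R)ᶜ ⊆ connectedComponentIn (thickening δ Ωᶜ ∪ (closedBall 0 R)ᶜ) q :=
      (hout ▸ isConnected_setOf_lt_norm hR).isPreconnected.subset_connectedComponentIn hq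
        subset_union_right
    exact (NormedSpace.unbounded_univ ℝ ℂ <| union_compl_self (closedBall (0 : ℂ) R) ▸
      isBounded_closedBall.union (hb.subset hsub)).elim

theorem exists_isCompact_omegaConvex_superset (hΩ : IsOpen Ω) (hL : IsCompact L) (hLΩ : L ⊆ Ω) :
    ∃ L', IsCompact L' ∧ OmegaConvex Ω L' ∧ L' ⊆ Ω ∧ L ⊆ L' := by
  obtain ⟨R, hR, hLR⟩ := hL.isBounded.exists_pos_norm_le
  obtain ⟨δ, hδ, hLδ⟩ := hL.exists_thickening_subset_open hΩ hLΩ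
  refine ⟨closedBall 0 R \ thickening δ Ωᶜ, (isCompact_closedBall 0 R).diff isOpen_thickening,
    omegaConvex_closedBall_diff_thickening hR.le, fun z hz => ?_, fun z hz => ⟨?_, fun hzδ => ?_⟩⟩
  · by_contra hzΩ
    exact hz.2 (self_subset_thickening hδ _ hzΩ)
  · exact mem_closedBall_zero_iff.2 (hLR z hz)
  · obtain ⟨w, hw, hzw⟩ := mem_thickening_iff.1 hzδ
    exact hw (hLδ (mem_thickening_iff.2 ⟨z, hz, dist_comm z w ▸ hzw⟩))

end Approximation

/-! ### Universality -/

section Universality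

theorem exists_forall_denseRange {X ι κ : Type*} [TopologicalSpace X] [BaireSpace X]
    [Nonempty X] [Countable ι] {Y : ι → Type*} [∀ i, TopologicalSpace (Y i)]
    [∀ i, SecondCountableTopology (Y i)] {T : ∀ i, κ → X → Y i} (hT : ∀ i k, Continuous (T i k))
    (htrans : ∀ i (U : Set X) (V : Set (Y i)), IsOpen U → U.Nonempty → IsOpen V → V.Nonempty →
      ∃ k, (U ∩ T i k ⁻¹' V).Nonempty) : ∃ x, ∀ i, DenseRange fun k => T i k x := by
  have (i : ι) := (TopologicalSpace.countable_countableBasis (Y i)).to_subtype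
  let hits (p : Σ i, TopologicalSpace.countableBasis (Y i)) : Set X := ⋃ k, T p.1 k ⁻¹' p.2
  have hopen (p) : IsOpen (hits p) := isOpen_iUnion fun k =>
    (TopologicalSpace.isOpen_of_mem_countableBasis p.2.2).preimage (hT p.1 k)
  have hdense (p) : Dense (hits p) := dense_iff_inter_open.2 fun U hU hUne => by
    obtain ⟨k, hk⟩ := htrans p.1 U p.2 hU hUne
      (TopologicalSpace.isOpen_of_mem_countableBasis p.2.2)
      (TopologicalSpace.nonempty_of_mem_countableBasis p.2.2)
    exact hk.mono (inter_subset_inter_right U (subset_iUnion (fun k => T p.1 k ⁻¹' p.2) k))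
  obtain ⟨x, hx⟩ := (dense_iInter_of_isOpen hopen hdense).nonempty
  refine ⟨x, fun i => (TopologicalSpace.isBasis_countableBasis (Y i)).dense_iff.2 fun V hV _ => ?_⟩
  obtain ⟨k, hk⟩ := mem_iUnion.1 (mem_iInter.1 hx ⟨i, V, hV⟩)
  exact ⟨_, hk, mem_range_self k⟩

variable {Ω : Set ℂ}

theorem isClosed_holomorphicAlgebra (hΩ : IsOpen Ω) :
    IsClosed (holomorphicAlgebra Ω Ω : Set C(Ω, ℂ)) := by
  refine isClosed_of_closure_subset fun f hf => ?_
  have := mem_closure_iff_nhdsWithin_neBot.1 hf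
  have := hΩ.locallyCompactSpace
  let extension (u : C(Ω, ℂ)) : ℂ → ℂ := Function.extend Subtype.val u 0
  have extension_apply (u : C(Ω, ℂ)) (z : Ω) : extension u z = u z :=
    Subtype.val_injective.extend_apply u 0 z
  have hlim : TendstoLocallyUniformlyOn extension (extension f)
      (𝓝[holomorphicAlgebra Ω Ω] f) Ω := by
    rw [tendstoLocallyUniformlyOn_iff_tendstoLocallyUniformly_comp_coe]
    have := ContinuousMap.tendsto_iff_tendstoLocallyUniformly.1
      (tendsto_id.mono_left (nhdsWithin_le_nhds (a := f) (s := holomorphicAlgebra Ω Ω)))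
    simpa only [Function.comp_def, extension_apply] using! this
  refine ⟨extension f, hlim.differentiableOn ?_ hΩ, fun z => (extension_apply f z).symm⟩
  filter_upwards [self_mem_nhdsWithin] with u hu
  obtain ⟨F, hF, hFu⟩ := hu
  exact hF.congr fun z hz => (extension_apply u ⟨z, hz⟩).trans (hFu ⟨z, hz⟩)

theorem baireSpace_holomorphicAlgebra (hΩ : IsOpen Ω) : BaireSpace (holomorphicAlgebra Ω Ω) := by
  have := hΩ.locallyCompactSpace
  have := (isClosed_holomorphicAlgebra hΩ).completeSpace_coe
  have : IsCountablyGenerated (uniformity (holomorphicAlgebra Ω Ω)) :=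
    comap.isCountablyGenerated _ _
  let := UniformSpace.pseudoMetricSpace (holomorphicAlgebra Ω Ω)
  infer_instance

theorem exists_isCompact_forall_mem_of_mem_nhds {X E : Type*} [TopologicalSpace X]
    [SeminormedAddCommGroup E] {f : C(X, E)} {U : Set C(X, E)} (hU : U ∈ 𝓝 f) :
    ∃ K : Set X, IsCompact K ∧ ∃ ε > 0, ∀ u : C(X, E), (∀ x ∈ K, ‖u x - f x‖ < ε) → u ∈ U := by
  obtain ⟨⟨K, ε⟩, ⟨hK, hε⟩, hKU⟩ := (nhds_basis_uniformity
    uniformity_basis_dist.compactConvergenceUniformity).mem_iff.1 hU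
  exact ⟨K, hK, ε, hε, fun u hu => hKU fun x hx => (dist_eq_norm (u x) (f x)).trans_lt (hu x hx)⟩

variable {ι κ : Type*} {φ : κ → ℂ → ℂ}

theorem exists_mem_holomorphicAlgebra_comp_mem (hΩ : IsOpen Ω) {S : Set ℂ} (hS : IsLavrentiev S)
    (hφ : ∀ k, ContinuousOn (φ k) S) (hmaps : ∀ k, MapsTo (φ k) S Ω)
    (hrun : ∀ L ⊆ Ω, IsCompact L → ∃ k, InjOn (φ k) S ∧ Disjoint (φ k '' S) L)
    {U : Set (holomorphicAlgebra Ω Ω)} (hU : IsOpen U) (hUne : U.Nonempty) {V : Set C(S, ℂ)}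
    (hV : IsOpen V) (hVne : V.Nonempty) :
    ∃ k, ∃ u ∈ U, (u : C(Ω, ℂ)).comp ⟨(hmaps k).restrict, (hφ k).mapsToRestrict (hmaps k)⟩ ∈ V := by
  obtain ⟨⟨f, F₀, hF₀, hf⟩, hfU⟩ := hUne
  obtain ⟨h, hh⟩ := hVne
  obtain ⟨W, hW, rfl⟩ := isOpen_induced_iff.1 hU
  obtain ⟨K, hK, ε, hε, hKW⟩ := exists_isCompact_forall_mem_of_mem_nhds (hW.mem_nhds hfU)
  obtain ⟨J, -, δ, hδ, hJV⟩ := exists_isCompact_forall_mem_of_mem_nhds (hV.mem_nhds hh)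
  obtain ⟨L, hL, hLc, hLΩ, hKL⟩ := exists_isCompact_omegaConvex_superset hΩ
    (hK.image continuous_subtype_val) (Subtype.coe_image_subset Ω K)
  obtain ⟨k, hinj, hdisj⟩ := hrun L hLΩ hL
  obtain ⟨F, hF, hFL, hFS⟩ := exists_differentiableOn_norm_comp_sub_lt hΩ hL hLc hLΩ hS (hφ k)
    hinj (hmaps k) hdisj hF₀ h (lt_min hε hδ)
  refine ⟨k, ⟨⟨Ω.domRestrict F, hF.continuousOn.domRestrict⟩, F, hF, fun _ => rfl⟩,
    hKW _ fun z hz => ?_, hJV _ fun z _ => (hFS z).trans_le (min_le_right ε δ)⟩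
  rw [hf]
  exact (hFL z (hKL (mem_image_of_mem _ hz))).trans_le (min_le_left ε δ)

theorem exists_differentiableOn_forall_dense_comp [Countable ι] {S : ι → Set ℂ} (hΩ : IsOpen Ω)
    (hS : ∀ i, IsLavrentiev (S i))
    (hφ : ∀ i k, ContinuousOn (φ k) (S i)) (hmaps : ∀ i k, MapsTo (φ k) (S i) Ω)
    (hrun : ∀ i, ∀ L ⊆ Ω, IsCompact L → ∃ k, InjOn (φ k) (S i) ∧ Disjoint (φ k '' S i) L) :
    ∃ f, DifferentiableOn ℂ f Ω ∧ ∀ i, ∀ h : C(S i, ℂ), ∀ ε > 0,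
      ∃ k, ∀ z : S i, ‖f (φ k z) - h z‖ < ε := by
  have := baireSpace_holomorphicAlgebra hΩ
  have (i : ι) := isCompact_iff_compactSpace.1 (hS i).isCompact
  obtain ⟨⟨f, F, hF, hf⟩, hdense⟩ := exists_forall_denseRange (X := holomorphicAlgebra Ω Ω)
    (T := fun i k u => (u : C(Ω, ℂ)).comp
      ⟨(hmaps i k).restrict, (hφ i k).mapsToRestrict (hmaps i k)⟩)
    (fun i k => (ContinuousMap.continuous_precomp _).comp continuous_subtype_val)
    fun i U V hU hUne hV hVne =>
      exists_mem_holomorphicAlgebra_comp_mem hΩ (hS i) (hφ i) (hmaps i) (hrun i) hU hUne hV hVne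
  refine ⟨F, hF, fun i h ε hε => ?_⟩
  obtain ⟨k, hk⟩ := (hdense i).exists_dist_lt h hε
  refine ⟨k, fun z => ?_⟩
  have := (ContinuousMap.dist_apply_le_dist z).trans_lt hk
  rwa [dist_comm, dist_eq_norm, ContinuousMap.comp_apply, hf] at this

end Universality

theorem locallyFinite_of_forall_le_dist {X ι : Type*} [PseudoMetricSpace X] {g : ι → Set X} {δ : ℝ}
    (hδ : 0 < δ) (hsep : ∀ j k, j ≠ k → ∀ x ∈ g j, ∀ y ∈ g k, δ ≤ dist x y) :
    LocallyFinite g := by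
  refine fun x => ⟨ball x (δ / 2), ball_mem_nhds x (half_pos hδ), Subsingleton.finite ?_⟩
  rintro j ⟨y, hyj, hy⟩ k ⟨z, hzk, hz⟩
  by_contra hjk
  have hyz := dist_triangle_right y z x
  linarith [hsep j k hjk y hyj z hzk, mem_ball.1 hy, mem_ball.1 hz]

theorem exists_mUniversal_of_jordan_union_general {ι : Type*} (g : ι → Set ℂ)
    (harc : ∀ k, IsJordanArc (g k) ∨ IsJordanCurve (g k)) (hfin : LocallyFinite g)
    (hdisj : Pairwise (Function.onFun Disjoint g)) (Ω : Set ℂ) (hΩ : IsOpen Ω) (φ : ℕ → ℂ → ℂ)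
    (hφc : ∀ n, ContinuousOn (φ n) (⋃ k, g k)) (hφm : ∀ n, MapsTo (φ n) (⋃ k, g k) Ω)
    (hrun : ∀ L ⊆ Ω, IsCompact L → ∀ K ⊆ ⋃ k, g k, IsCompact K → IsConnected Kᶜ →
      ∃ n, InjOn (φ n) K ∧ (φ n '' K) ∩ L = ∅) :
    ∃ f, DifferentiableOn ℂ f Ω ∧
      MUniversal {K | K ⊆ ⋃ k, g k ∧ IsCompact K ∧ IsConnected Kᶜ} φ f := by
  obtain ⟨𝓕, h𝓕, hLav, hcof⟩ := exists_countable_isLavrentiev_iUnion harc hfin hdisj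
  have := h𝓕.to_subtype
  obtain ⟨f, hf, huniv⟩ := exists_differentiableOn_forall_dense_comp (S := ((↑) : 𝓕 → Set ℂ)) hΩ
    (fun S => (hLav S S.2).1) (fun S n => (hφc n).mono (hLav S S.2).2)
    (fun S n => (hφm n).mono_left (hLav S S.2).2) fun S L hLΩ hL => by
      obtain ⟨hS, hSg⟩ := hLav S S.2
      simpa only [disjoint_iff_inter_eq_empty] using
        hrun L hLΩ hL S hSg hS.isCompact hS.isConnected_compl
  refine ⟨f, hf, fun K ⟨hKg, hK, hKc⟩ h hh ε hε => ?_⟩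
  obtain ⟨S, hS, hKS⟩ := hcof K hKg hK hKc
  obtain ⟨H, hH⟩ := ContinuousMap.exists_restrict_eq hK.isClosed ⟨K.domRestrict h, hh.domRestrict⟩
  obtain ⟨n, hn⟩ := huniv ⟨S, hS⟩ (H.restrict S) ε hε
  refine ⟨n, fun z hz => ?_⟩
  have hHz : H z = h z := DFunLike.congr_fun hH ⟨z, hz⟩
  exact hHz ▸ hn ⟨z, hKS hz⟩

/-- Corollary `coro-Jordan-union`. -/
theorem exists_mUniversal_of_jordan_union
    (G : Set ℂ) (g : ℕ → Set ℂ) (hG : G = ⋃ k, g k)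
    (harc : ∀ k, IsJordanArc (g k) ∨ IsJordanCurve (g k))
    (hsep : ∃ δ : ℝ, 0 < δ ∧ ∀ k k' : ℕ, k ≠ k' → ∀ x ∈ g k, ∀ y ∈ g k', δ ≤ dist x y)
    (Ω : Set ℂ) (hΩ : IsOpen Ω) (hΩconn : IsConnected Ω)
    (φ : ℕ → ℂ → ℂ) (hφc : ∀ n, ContinuousOn (φ n) G) (hφm : ∀ n, Set.MapsTo (φ n) G Ω)
    (hyp : ∀ L : Set ℂ, L ⊆ Ω → IsCompact L →
      ∀ K : Set ℂ, K ⊆ G → IsCompact K → IsConnected Kᶜ →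
        ∃ n : ℕ, Set.InjOn (φ n) K ∧ (φ n '' K) ∩ L = ∅) :
    ∃ f : ℂ → ℂ, DifferentiableOn ℂ f Ω ∧
      MUniversal {K : Set ℂ | K ⊆ G ∧ IsCompact K ∧ IsConnected Kᶜ} φ f := by
  obtain ⟨δ, hδ, hsep⟩ := hsep
  subst hG
  exact exists_mUniversal_of_jordan_union_general g harc (locallyFinite_of_forall_le_dist hδ hsep)
    (fun j k hjk => disjoint_left.2 fun x hxj hxk =>
      (hsep j k hjk x hxj x hxk).not_gt (dist_self x ▸ hδ)) Ω hΩ φ hφc hφm hyp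
end

section
/- Let G ⊆ ℂ be a closed set with empty interior, Ω ⊆ ℂ a domain, Φ = (φₙ) a sequence of continuous maps from G to Ω, and M a countable family of compact subsets of G. If there exists a (Φ,M)-universal function in H(Ω), then for every compact set L ⊆ Ω, every K ∈ M, and every pair of disjoint compact sets I₁, I₂ ∈ M with K ∪ I₁ ∪ I₂ ∈ M, there exist infinitely many n ∈ ℕ such that φₙ(K) ∩ L = ∅ and φₙ(I₁) ∩ φₙ(I₂) = ∅. -/
open Set Metric Bornology Filter

/-! Since the maps `f ∘ φ n` approximate every continuous function on `S = K ∪ I₁ ∪ I₂`, each such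
function is approximated for infinitely many `n`: the functions `h + v` with `v` a small constant
are targets as well, and finitely many `n` cannot serve all of them. Choose a target whose modulus
exceeds the bound of `‖f‖` on `L` and, by Urysohn's lemma, takes two well-separated values on `I₁`
and `I₂`; then `‖f‖` itself separates `φ n '' K` from `L` and `φ n '' I₁` from `φ n '' I₂`. -/

section UniversalOn

open scoped Topology

variable {ι X Y E : Type*} [TopologicalSpace Y] [NormedAddCommGroup E]

/-- `f` is *universal on `S`* along `φ`: the maps `f ∘ φ n` approximate every continuous function
on `S` uniformly. This is the condition that `MUniversal M φ f` imposes on each `S ∈ M`, for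
arbitrary index sets, spaces and values. -/
def UniversalOn (S : Set Y) (φ : ι → Y → X) (f : X → E) : Prop :=
  ∀ h : Y → E, ContinuousOn h S → ∀ ε : ℝ, 0 < ε → ∃ n, ∀ z ∈ S, ‖f (φ n z) - h z‖ < ε

variable {S : Set Y} {φ : ι → Y → X} {f : X → E}

theorem UniversalOn.infinite_setOf_norm_sub_lt [(𝓝[≠] (0 : E)).NeBot] (hf : UniversalOn S φ f)
    (hS : S.Nonempty) {h : Y → E} (hh : ContinuousOn h S) {ε : ℝ} (hε : 0 < ε) :
    {n | ∀ z ∈ S, ‖f (φ n z) - h z‖ < ε}.Infinite := by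
  intro hfin
  obtain ⟨z₀, hz₀⟩ := hS
  set A : Set E := (fun n => f (φ n z₀) - h z₀) '' {n | ∀ z ∈ S, ‖f (φ n z) - h z‖ < ε}
  have hA : A.Finite := hfin.image _
  obtain ⟨v, hv⟩ : (ball (0 : E) ε \ A).Nonempty :=
    ((infinite_of_mem_nhds 0 (ball_mem_nhds 0 hε)).sdiff hA).nonempty
  obtain ⟨δ, hδ, hball⟩ := Metric.isOpen_iff.1 (isOpen_ball.sdiff hA.isClosed) v hv
  obtain ⟨n, hn⟩ := hf (fun z => h z + v) (hh.add continuousOn_const) δ hδ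
  have hmem : ∀ z ∈ S, f (φ n z) - h z ∈ ball (0 : E) ε \ A := fun z hz =>
    hball (by simpa only [mem_ball, dist_eq_norm, sub_sub] using hn z hz)
  exact (hmem z₀ hz₀).2 ⟨n, fun z hz => mem_ball_zero_iff.1 (hmem z hz).1, rfl⟩

variable [NormedSpace ℝ E] [Nontrivial E]

theorem UniversalOn.infinite_setOf_abs_norm_sub_lt (hf : UniversalOn S φ f) (hS : S.Nonempty)
    {p : Y → ℝ} (hp : ContinuousOn p S) (hp₀ : ∀ z ∈ S, 0 ≤ p z) {ε : ℝ} (hε : 0 < ε) :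
    {n | ∀ z ∈ S, |‖f (φ n z)‖ - p z| < ε}.Infinite := by
  have : (𝓝[≠] (0 : E)).NeBot := Module.punctured_nhds_neBot ℝ E 0
  obtain ⟨v, hv⟩ := exists_norm_eq E zero_le_one
  refine (hf.infinite_setOf_norm_sub_lt hS (hp.smul (continuousOn_const (c := v))) hε).mono
    fun n hn z hz => ?_
  have hpv : ‖p z • v‖ = p z := by rw [norm_smul, hv, mul_one, Real.norm_of_nonneg (hp₀ z hz)]
  calc |‖f (φ n z)‖ - p z| = |‖f (φ n z)‖ - ‖p z • v‖| := by rw [hpv]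
    _ ≤ ‖f (φ n z) - p z • v‖ := abs_norm_sub_norm_le _ _
    _ < ε := hn z hz

theorem mUniversal_necessary_condition_general [Infinite ι] [NormalSpace Y] {L : Set X}
    (hL : IsBounded (f '' L)) {K I₁ I₂ : Set Y} (hI₁ : IsClosed I₁) (hI₂ : IsClosed I₂)
    (hI : I₁ ∩ I₂ = ∅) (hf : UniversalOn (K ∪ I₁ ∪ I₂) φ f) :
    {n | (φ n '' K) ∩ L = ∅ ∧ (φ n '' I₁) ∩ (φ n '' I₂) = ∅}.Infinite := by
  rcases (K ∪ I₁ ∪ I₂).eq_empty_or_nonempty with hempty | hne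
  · obtain ⟨⟨rfl, rfl⟩, rfl⟩ : (K = ∅ ∧ I₁ = ∅) ∧ I₂ = ∅ := by
      simpa only [union_empty_iff] using hempty
    simpa using infinite_univ
  obtain ⟨R, hR, hfL⟩ := hL.exists_pos_norm_le
  obtain ⟨u, hu₁, hu₂, hu⟩ :=
    exists_continuous_zero_one_of_isClosed hI₁ hI₂ (disjoint_iff_inter_eq_empty.2 hI)
  refine (hf.infinite_setOf_abs_norm_sub_lt hne (p := fun z => R + 1 + 2 * u z)
    (by fun_prop) (fun z _ => by linarith [(hu z).1]) one_pos).mono fun n hn => ⟨?_, ?_⟩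
  · refine eq_empty_of_forall_notMem ?_
    rintro _ ⟨⟨z, hz, rfl⟩, hzL⟩
    have hgt : R < ‖f (φ n z)‖ := by
      linarith [(abs_lt.1 (hn z (.inl (.inl hz)))).1, (hu z).1]
    exact hgt.not_ge (hfL _ (mem_image_of_mem f hzL))
  · refine eq_empty_of_forall_notMem ?_
    rintro _ ⟨⟨z, hz, rfl⟩, ⟨w, hw, hwz⟩⟩
    have huz : u z = 0 := hu₁ hz
    have huw : u w = 1 := hu₂ hw
    have hlt : ‖f (φ n z)‖ < R + 2 := by linarith [(abs_lt.1 (hn z (.inl (.inr hz)))).2]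
    have hgt : R + 2 < ‖f (φ n w)‖ := by linarith [(abs_lt.1 (hn w (.inr hw))).1]
    exact (hlt.trans hgt).ne (by rw [hwz])

end UniversalOn

/-- Proposition `prop-nec-G-empty-interior`. -/
theorem mUniversal_necessary_condition
    (G : Set ℂ) (hGcl : IsClosed G) (hGint : interior G = ∅)
    (Ω : Set ℂ) (hΩ : IsOpen Ω) (hΩconn : IsConnected Ω)
    (φ : ℕ → ℂ → ℂ) (hφc : ∀ n, ContinuousOn (φ n) G) (hφm : ∀ n, Set.MapsTo (φ n) G Ω)
    (M : Set (Set ℂ)) (hMc : M.Countable) (hM : ∀ K ∈ M, K ⊆ G ∧ IsCompact K)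
    (f : ℂ → ℂ) (hf : DifferentiableOn ℂ f Ω) (hfu : MUniversal M φ f) :
    ∀ L : Set ℂ, L ⊆ Ω → IsCompact L → ∀ K ∈ M, ∀ I₁ ∈ M, ∀ I₂ ∈ M,
      I₁ ∩ I₂ = ∅ → K ∪ I₁ ∪ I₂ ∈ M →
        {n : ℕ | (φ n '' K) ∩ L = ∅ ∧ (φ n '' I₁) ∩ (φ n '' I₂) = ∅}.Infinite := by
  intro L hL hLc K _ I₁ hI₁ I₂ hI₂ hI hU
  exact mUniversal_necessary_condition_general
    (hLc.image_of_continuousOn (hf.continuousOn.mono hL)).isBounded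
    (hM I₁ hI₁).2.isClosed (hM I₂ hI₂).2.isClosed hI (hfu _ hU)
end
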